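/- Let n ≥ 3 and let G be a nontrivial finite subgroup of Aut(F_n) whose order is not a power of 2. Then the normal closure N(G) of G in Aut(F_n) equals SAut(F_n) if G ⊆ SAut(F_n), and equals Aut(F_n) otherwise. -/

import Mathlib

open Matrix

namespace NormalClosurePaper

/-- The automorphism group of the free group on `n` generators. -/
abbrev FrAut (n : ℕ) := MulAut (FreeGroup (Fin n))

/-- Exponent sum of the generator `x_i` in a word of the free group. -/
def expSum {n : ℕ} (i : Fin n) : FreeGroup (Fin n) →* Multiplicative ℤ :=
  FreeGroup.lift fun j => Multiplicative.ofAdd (if j = i then (1 : ℤ) else 0)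

/-- The abelianized matrix of an automorphism of the free group:
the `(i, j)` entry is the exponent sum of `x_i` in `f x_j`. -/
def mat {n : ℕ} (f : FrAut n) : Matrix (Fin n) (Fin n) ℤ :=
  Matrix.of fun i j => (expSum i (f (FreeGroup.of j))).toAdd

lemma expSum_apply {n : ℕ} (f : FrAut n) (i : Fin n) (w : FreeGroup (Fin n)) :
    (expSum i (f w)).toAdd = ∑ k, mat f i k * (expSum k w).toAdd := by
  induction w using FreeGroup.induction_on with
  | C1 => simp
  | of j =>
      have h : (expSum i (f (FreeGroup.of j))).toAdd = mat f i j := rfl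
      rw [h]
      simp [expSum, mul_ite, Finset.sum_ite_eq]
  | inv_of j ih =>
      simp only [_root_.map_inv, toAdd_inv, mul_neg, Finset.sum_neg_distrib, ih]
  | mul x y ihx ihy =>
      simp only [_root_.map_mul, toAdd_mul, mul_add, Finset.sum_add_distrib, ihx, ihy]

lemma mat_one {n : ℕ} : mat (1 : FrAut n) = 1 := by
  ext i j
  simp [mat, expSum, Matrix.one_apply, eq_comm]

lemma mat_mul {n : ℕ} (f g : FrAut n) : mat (f * g) = mat f * mat g := by
  ext i j
  rw [Matrix.mul_apply]
  show (expSum i ((f * g) (FreeGroup.of j))).toAdd = _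
  rw [show (f * g) (FreeGroup.of j) = f (g (FreeGroup.of j)) from rfl, expSum_apply]
  rfl

/-- The matrix of the induced map on the abelianization, as a monoid homomorphism. -/
def matHom (n : ℕ) : FrAut n →* Matrix (Fin n) (Fin n) ℤ where
  toFun := mat
  map_one' := mat_one
  map_mul' := mat_mul

/-- The homomorphism `Aut(F_n) → GL_n(ℤ)` induced by abelianization. -/
def ρ (n : ℕ) : FrAut n →* GL (Fin n) ℤ := (matHom n).toHomUnits

/-- The composition of `ρ` with the determinant. -/
def detρ (n : ℕ) : FrAut n →* ℤˣ := (Matrix.GeneralLinearGroup.det).comp (ρ n)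

/-- The special automorphism group `SAut(F_n)`: automorphisms whose induced matrix
has determinant `1`. -/
def SAut (n : ℕ) : Subgroup (FrAut n) := (detρ n).ker

/-- The Torelli subgroup `IA_n`, the kernel of `ρ`. -/
def IA (n : ℕ) : Subgroup (FrAut n) := (ρ n).ker

/-- The group of inner automorphisms of the free group. -/
def Inn (n : ℕ) : Subgroup (FrAut n) := (MulAut.conj (G := FreeGroup (Fin n))).range

instance Inn_normal (n : ℕ) : (Inn n).Normal := by
  constructor
  rintro - ⟨a, rfl⟩ g
  refine ⟨g a, ?_⟩
  ext y
  simp [MulAut.conj_apply, MulAut.mul_apply, _root_.map_mul, _root_.map_inv]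

/-- The outer automorphism group `Out(F_n)`. -/
abbrev OutF (n : ℕ) := FrAut n ⧸ Inn n

/-- The projection `Aut(F_n) → Out(F_n)`. -/
def toOut (n : ℕ) : FrAut n →* OutF n := QuotientGroup.mk' (Inn n)

lemma mat_conj {n : ℕ} (g : FreeGroup (Fin n)) : mat (MulAut.conj g) = 1 := by
  rw [← mat_one (n := n)]
  ext i j
  simp only [mat, Matrix.of_apply, MulAut.conj_apply, MulAut.one_apply, _root_.map_mul,
    _root_.map_inv, toAdd_mul, toAdd_inv]
  omega

lemma ρ_conj {n : ℕ} (g : FreeGroup (Fin n)) : ρ n (MulAut.conj g) = 1 :=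
  Units.ext (mat_conj g)

/-- The homomorphism `Out(F_n) → GL_n(ℤ)` induced by abelianization. -/
def ρOut (n : ℕ) : OutF n →* GL (Fin n) ℤ :=
  QuotientGroup.lift (Inn n) (ρ n) (by rintro - ⟨g, rfl⟩; exact ρ_conj g)

/-- The composition of `ρOut` with the determinant. -/
def detρOut (n : ℕ) : OutF n →* ℤˣ := (Matrix.GeneralLinearGroup.det).comp (ρOut n)

/-- The special outer automorphism group `SOut(F_n)`. -/
def SOut (n : ℕ) : Subgroup (OutF n) := (detρOut n).ker

/-- Entrywise reduction `GL_n(ℤ) → GL_n(ℤ/ℓℤ)`. -/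
def redGL (n ℓ : ℕ) : GL (Fin n) ℤ →* GL (Fin n) (ZMod ℓ) :=
  Units.map (RingHom.mapMatrix (Int.castRingHom (ZMod ℓ))).toMonoidHom

/-- The subgroup `GΓ_n(ℓ)` of `GL_n(ℤ)` of matrices congruent to the identity mod `ℓ`. -/
def GGamma (n ℓ : ℕ) : Subgroup (GL (Fin n) ℤ) := (redGL n ℓ).ker

/-- The level `ℓ` congruence subgroup `Γ_n(ℓ)` (viewed inside `GL_n(ℤ)`): matrices with
determinant `1` that are congruent to the identity mod `ℓ`. -/
def GammaGL (n ℓ : ℕ) : Subgroup (GL (Fin n) ℤ) :=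
  GGamma n ℓ ⊓ (Matrix.GeneralLinearGroup.det).ker

/-- Reduction `SL_n(ℤ) → SL_n(ℤ/ℓℤ)`. -/
def redSL (n ℓ : ℕ) : Matrix.SpecialLinearGroup (Fin n) ℤ →*
    Matrix.SpecialLinearGroup (Fin n) (ZMod ℓ) :=
  Matrix.SpecialLinearGroup.map (Int.castRingHom (ZMod ℓ))

/-- Projection `SL_n(ℤ/ℓℤ) → PSL_n(ℤ/ℓℤ)`. -/
def projPSL (n ℓ : ℕ) : Matrix.SpecialLinearGroup (Fin n) (ZMod ℓ) →*
    Matrix.ProjectiveSpecialLinearGroup (Fin n) (ZMod ℓ) :=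
  QuotientGroup.mk' _

section Cuts

variable {V : Type*}

/-- The directed edges of the relation `R` leaving the set `A`. -/
def cutEdges (R : V → V → Prop) (A : Set V) : Set (V × V) :=
  {e | R e.1 e.2 ∧ e.1 ∈ A ∧ e.2 ∉ A}

/-- Connectedness of the set `A` for the relation `R`. -/
def ConnOn (R : V → V → Prop) (A : Set V) : Prop :=
  ∀ B ⊆ A, (∀ b ∈ B, ∀ a ∈ A \ B, ¬ R b a) → B = ∅ ∨ B = A

/-- Two sets are nested if one of the four corners they determine is empty. -/
def Nested (A B : Set V) : Prop :=
  A ∩ B = ∅ ∨ A ∩ Bᶜ = ∅ ∨ Aᶜ ∩ B = ∅ ∨ Aᶜ ∩ Bᶜ = ∅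

lemma Nested.symm {A B : Set V} (h : Nested A B) : Nested B A := by
  unfold Nested at *
  rw [Set.inter_comm B A, Set.inter_comm B, Set.inter_comm Bᶜ, Set.inter_comm Bᶜ]
  tauto

lemma nested_compl_right {A B : Set V} : Nested A Bᶜ ↔ Nested A B := by
  unfold Nested
  rw [compl_compl]
  tauto

lemma nested_compl_left {A B : Set V} : Nested Aᶜ B ↔ Nested A B := by
  unfold Nested
  rw [compl_compl]
  tauto

lemma Nested.image {A B : Set V} (σ : Equiv.Perm V) (h : Nested A B) :
    Nested (σ '' A) (σ '' B) := by
  unfold Nested at *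
  simpa only [← Set.image_compl_eq σ.bijective, ← Set.image_inter σ.injective,
    Set.image_eq_empty] using h

lemma cutEdges_compl {R : V → V → Prop} (hR : ∀ ⦃x y⦄, R x y → R y x) (A : Set V) :
    cutEdges R Aᶜ = Prod.swap '' cutEdges R A := by
  ext ⟨x, y⟩
  simp only [cutEdges, Set.mem_ofPred_eq, Set.mem_compl_iff, not_not, Set.mem_image, Prod.exists,
    Prod.swap_prod_mk, Prod.mk.injEq]
  constructor
  · rintro ⟨h, hx, hy⟩
    exact ⟨y, x, ⟨hR h, hy, hx⟩, rfl, rfl⟩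
  · rintro ⟨a, b, ⟨h, ha, hb⟩, rfl, rfl⟩
    exact ⟨hR h, hb, ha⟩

lemma ncard_cutEdges_compl {R : V → V → Prop} (hR : ∀ ⦃x y⦄, R x y → R y x) (A : Set V) :
    (cutEdges R Aᶜ).ncard = (cutEdges R A).ncard := by
  rw [cutEdges_compl hR, Set.ncard_image_of_injective _ Prod.swap_injective]

lemma cutEdges_submodular {R : V → V → Prop} {A B : Set V} (hA : (cutEdges R A).Finite)
    (hB : (cutEdges R B).Finite) :
    (cutEdges R (A ∩ B)).ncard + (cutEdges R (A ∪ B)).ncard ≤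
      (cutEdges R A).ncard + (cutEdges R B).ncard := by
  have h1 : cutEdges R (A ∩ B) ∪ cutEdges R (A ∪ B) ⊆ cutEdges R A ∪ cutEdges R B := by
    rintro ⟨x, y⟩
    simp only [cutEdges, Set.mem_union, Set.mem_inter_iff, Set.mem_ofPred_eq]
    tauto
  have h2 : cutEdges R (A ∩ B) ∩ cutEdges R (A ∪ B) ⊆ cutEdges R A ∩ cutEdges R B := by
    rintro ⟨x, y⟩
    simp only [cutEdges, Set.mem_union, Set.mem_inter_iff, Set.mem_ofPred_eq]
    tauto
  have hU := hA.union hB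
  have f1 := hU.subset (Set.subset_union_left.trans h1)
  have f2 := hU.subset (Set.subset_union_right.trans h1)
  rw [← Set.ncard_union_add_ncard_inter _ _ f1 f2, ← Set.ncard_union_add_ncard_inter _ _ hA hB]
  exact add_le_add (Set.ncard_le_ncard h1 hU) (Set.ncard_le_ncard h2 (hA.inter_of_left _))

/-- In a connected graph only finitely many bonds of a given size separate two given vertices. -/
lemma finite_bonds (m : ℕ) : ∀ (R : V → V → Prop), (∀ ⦃x y⦄, R x y → R y x) → ConnOn R Set.univ →
    ∀ x y : V,
    {A : Set V | x ∈ A ∧ y ∉ A ∧ ConnOn R A ∧ ConnOn R Aᶜ ∧ (cutEdges R A).Finite ∧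
      (cutEdges R A).ncard = m}.Finite := by
  induction m with
  | zero =>
    intro R hR hc x y
    convert Set.finite_empty
    ext A
    simp only [Set.mem_ofPred_eq, Set.mem_empty_iff_false, iff_false]
    rintro ⟨hx, hy, -, -, hf, h0⟩
    rw [Set.ncard_eq_zero hf] at h0
    rcases hc A (Set.subset_univ _) (fun b hb a ha hr => by
      have : (b, a) ∈ cutEdges R A := ⟨hr, hb, ha.2⟩
      simp [h0] at this) with h | h
    · simp [h] at hx
    · simp [h] at hy
  | succ m ih =>
    intro R hR hc
    have edge : ∀ a b : V, R a b →
        {A : Set V | a ∈ A ∧ b ∉ A ∧ ConnOn R A ∧ ConnOn R Aᶜ ∧ (cutEdges R A).Finite ∧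
          (cutEdges R A).ncard = m + 1}.Finite := by
      intro a b hab
      set R' : V → V → Prop := fun u v => R u v ∧ ¬ (u = a ∧ v = b) ∧ ¬ (u = b ∧ v = a) with hR'
      have hsymm : ∀ ⦃x y⦄, R' x y → R' y x := by
        rintro u v ⟨h, h1, h2⟩
        exact ⟨hR h, fun h => h2 ⟨h.2, h.1⟩, fun h => h1 ⟨h.2, h.1⟩⟩
      have key : ∀ A : Set V, a ∈ A → b ∉ A → ConnOn R A → ConnOn R Aᶜ →
          ConnOn R' A ∧ ConnOn R' Aᶜ := by
        intro A ha hb h1 h2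
        refine ⟨fun B hB h => h1 B hB fun u hu v hv hr => h u hu v hv ⟨hr, ?_, ?_⟩,
          fun B hB h => h2 B hB fun u hu v hv hr => h u hu v hv ⟨hr, ?_, ?_⟩⟩
        · rintro ⟨rfl, rfl⟩; exact hb hv.1
        · rintro ⟨rfl, rfl⟩; exact hb (hB hu)
        · rintro ⟨rfl, rfl⟩; exact hB hu ha
        · rintro ⟨rfl, rfl⟩; exact hv.1 ha
      by_cases hc' : ConnOn R' Set.univ
      · refine (ih R' hsymm hc' a b).subset ?_
        rintro A ⟨ha, hb, h1, h2, hf, hm⟩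
        have hd : cutEdges R' A = cutEdges R A \ {(a, b)} := by
          ext ⟨u, v⟩
          simp only [cutEdges, hR', Set.mem_ofPred_eq, Set.mem_sdiff, Set.mem_singleton_iff,
            Prod.mk.injEq]
          constructor
          · tauto
          · rintro ⟨⟨h, hu, hv⟩, hne⟩
            refine ⟨⟨h, hne, ?_⟩, hu, hv⟩
            rintro ⟨rfl, rfl⟩
            exact hb hu
        refine ⟨ha, hb, (key A ha hb h1 h2).1, (key A ha hb h1 h2).2, ?_, ?_⟩
        · rw [hd]; exact hf.sdiff
        · rw [hd, Set.ncard_sdiff_singleton_of_mem (show (a, b) ∈ cutEdges R A from ⟨hab, ha, hb⟩),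
            hm]
          rfl
      · unfold ConnOn at hc'
        push Not at hc'
        obtain ⟨B, -, hB, hB0, hB1⟩ := hc'
        refine (Set.toFinite {B, Bᶜ}).subset ?_
        rintro A ⟨ha, hb, h1, h2, -, -⟩
        obtain ⟨k1, k2⟩ := key A ha hb h1 h2
        have e1 := k1 (B ∩ A) Set.inter_subset_right fun u hu v hv =>
          hB u hu.1 v ⟨trivial, fun h => hv.2 ⟨h, hv.1⟩⟩
        have e2 := k2 (B ∩ Aᶜ) Set.inter_subset_right fun u hu v hv =>
          hB u hu.1 v ⟨trivial, fun h => hv.2 ⟨h, hv.1⟩⟩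
        have hBu : B = (B ∩ A) ∪ (B ∩ Aᶜ) := (Set.inter_union_compl B A).symm
        rcases e1 with e1 | e1 <;> rcases e2 with e2 | e2 <;> rw [e1, e2] at hBu
        · simp at hBu; simp [hBu] at hB0
        · right; simp [hBu]
        · left; simp [hBu]
        · exact absurd (by simpa using hBu) hB1
    intro x
    have hS := hc {y | {A : Set V | x ∈ A ∧ y ∉ A ∧ ConnOn R A ∧ ConnOn R Aᶜ ∧
      (cutEdges R A).Finite ∧ (cutEdges R A).ncard = m + 1}.Finite} (Set.subset_univ _) (by
        intro y hy z hz hr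
        refine hz.2 ((Set.Finite.union hy (edge y z hr)).subset ?_)
        rintro A ⟨hx, hzA, h⟩
        by_cases hyA : y ∈ A
        · exact Or.inr ⟨hyA, hzA, h⟩
        · exact Or.inl ⟨hx, hyA, h⟩)
    rcases hS with h | h
    · exfalso
      have : x ∈ (∅ : Set V) := by
        rw [← h]
        change Set.Finite _
        convert Set.finite_empty
        ext A
        simp only [Set.mem_ofPred_eq, Set.mem_empty_iff_false, iff_false]
        tauto
      simp at this
    · intro y
      have : y ∈ Set.univ := trivial
      rw [← h] at this
      exact this

/-- A finite bond is crossed by only finitely many bonds of a given size. -/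
lemma finite_crossing {R : V → V → Prop} (hR : ∀ ⦃x y⦄, R x y → R y x)
    (hc : ConnOn R Set.univ) (m : ℕ)
    {A : Set V} (hA : (cutEdges R A).Finite) :
    {B : Set V | ¬ Nested A B ∧ ConnOn R B ∧ ConnOn R Bᶜ ∧ (cutEdges R B).Finite ∧
      (cutEdges R B).ncard = m}.Finite := by
  set P : Set V := Prod.fst '' cutEdges R A ∪ Prod.snd '' cutEdges R A with hP
  have hPf : P.Finite := (hA.image _).union (hA.image _)
  refine ((hPf.prod hPf).biUnion fun e _ => finite_bonds m R hR hc e.1 e.2).subset ?_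
  rintro B ⟨hn, h1, h2, hf, hm⟩
  by_contra hcon
  have hsep : ∀ x ∈ P, ∀ y ∈ P, x ∈ B → y ∈ B := by
    intro x hx y hy hxB
    by_contra hyB
    exact hcon (Set.mem_biUnion (Set.mk_mem_prod hx hy) ⟨hxB, hyB, h1, h2, hf, hm⟩)
  have main : ∀ C : Set V, ConnOn R C → (∀ x ∈ P, x ∉ C) → Nested A C := by
    intro C hC hPC
    rcases hC (C ∩ A) Set.inter_subset_left (fun u hu v hv hr => hPC u
      (Or.inl ⟨(u, v), ⟨hr, hu.2, fun h => hv.2 ⟨hv.1, h⟩⟩, rfl⟩) hu.1) with h | h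
    · left; rw [Set.inter_comm]; exact h
    · right; right; left
      rw [Set.inter_comm, ← Set.sdiff_eq, Set.sdiff_eq_empty]
      exact Set.inter_eq_left.1 h
  by_cases hx : ∃ x ∈ P, x ∈ B
  · obtain ⟨x, hx, hxB⟩ := hx
    exact hn (nested_compl_right.1 (main Bᶜ h2 fun y hy h => h (hsep x hx y hy hxB)))
  · push Not at hx
    exact hn (main B h1 hx)

lemma nested_corners {A B G : Set V} (h : (Aᶜ ∩ Bᶜ).Nonempty) (hA : Nested G A)
    (hB : Nested G B) : Nested G (A ∩ B) := by
  obtain ⟨x, hx⟩ := h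
  unfold Nested at *
  simp only [Set.eq_empty_iff_forall_notMem, Set.mem_inter_iff, Set.mem_compl_iff] at *
  have hA' := hA
  have hB' := hB
  rcases hA with h1 | h1 | h1 | h1
  · left; grind
  · rcases hB with h2 | h2 | h2 | h2
    · left; grind
    · right; left; grind
    · right; right; left; grind
    · exact absurd (h1 x) (by grind)
  · right; right; left; grind
  · rcases hB with h2 | h2 | h2 | h2
    · left; grind
    · exact absurd (h1 x) (by grind)
    · right; right; left; grind
    · right; right; right; grind

/-- A class of cuts of a connected graph which is closed under complements, under one part of a
disconnected splitting, and under one pair of opposite corners, contains a cut nested with all its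
images under the automorphisms of the graph preserving the class. -/
theorem exists_nested_cut {R : V → V → Prop} (hR : ∀ ⦃x y⦄, R x y → R y x)
    (hc : ConnOn R Set.univ) {W : Set (Set V)} (hne : W.Nonempty)
    (hfin : ∀ A ∈ W, (cutEdges R A).Finite) (hcompl : ∀ A ∈ W, Aᶜ ∈ W) (hempty : ∅ ∉ W)
    (hsplit : ∀ A ∈ W, ∀ B ⊆ A, (∀ b ∈ B, ∀ a ∈ A \ B, ¬ R b a) → B ∈ W ∨ A \ B ∈ W)
    (hcorner : ∀ A ∈ W, ∀ B ∈ W, (A ∩ B ∈ W ∧ A ∪ B ∈ W) ∨ (A ∩ Bᶜ ∈ W ∧ A ∪ Bᶜ ∈ W)) :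
    ∃ A ∈ W, ∀ σ : Equiv.Perm V, (∀ x y, R (σ x) (σ y) ↔ R x y) →
      (∀ B, σ '' B ∈ W ↔ B ∈ W) → Nested A (σ '' A) := by
  have huniv : Set.univ ∉ W := fun h => hempty (by simpa using hcompl _ h)
  obtain ⟨A₀, hA₀, hmin⟩ := exists_minimalFor_of_wellFoundedLT (· ∈ W)
    (fun A => (cutEdges R A).ncard) hne
  replace hmin : ∀ B ∈ W, (cutEdges R A₀).ncard ≤ (cutEdges R B).ncard := fun B hB =>
    (le_total _ _).elim id (fun h => hmin hB h)
  set k := (cutEdges R A₀).ncard with hk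
  set M : Set (Set V) := {A | A ∈ W ∧ (cutEdges R A).ncard = k} with hM
  have hMc : ∀ A ∈ M, Aᶜ ∈ M := fun A hA =>
    ⟨hcompl A hA.1, by rw [ncard_cutEdges_compl hR, hA.2]⟩
  have hconn : ∀ A ∈ M, ConnOn R A := by
    have aux : ∀ A ∈ M, ∀ B ⊆ A, (∀ b ∈ B, ∀ a ∈ A \ B, ¬ R b a) → B ∈ W → B ≠ A → False := by
      rintro A ⟨hA, hAk⟩ B hBA hB hBW hne
      have hsub : cutEdges R B ⊂ cutEdges R A := by
        refine (Set.ssubset_iff_of_subset ?_).2 ?_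
        · rintro ⟨x, y⟩ ⟨h, hx, hy⟩
          exact ⟨h, hBA hx, fun hyA => hB x hx y ⟨hyA, hy⟩ h⟩
        · by_contra hcon
          push Not at hcon
          rcases hc (A \ B) (Set.subset_univ _) (by
            rintro b ⟨hbA, hbB⟩ a ⟨-, ha⟩ hr
            by_cases haA : a ∈ A
            · exact hB a (by_contra fun h => ha ⟨haA, h⟩) b ⟨hbA, hbB⟩ (hR hr)
            · exact hbB (hcon (b, a) ⟨hr, hbA, haA⟩).2.1) with h | h
          · exact hne (hBA.antisymm (Set.sdiff_eq_empty.1 h))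
          · have : A = Set.univ := Set.univ_subset_iff.1 (h ▸ Set.sdiff_subset)
            exact huniv (this ▸ hA)
      exact absurd (Set.ncard_lt_ncard hsub (hfin A hA)) (by rw [hAk]; exact not_lt.2 (hmin B hBW))
    intro A hA B hBA hB
    by_contra hcon
    push Not at hcon
    rcases hsplit A hA.1 B hBA hB with h | h
    · exact aux A hA B hBA hB h hcon.2
    · refine aux A hA _ Set.sdiff_subset ?_ h ?_
      · rintro b ⟨hbA, hbB⟩ a ⟨haA, ha⟩ hr
        exact hB a (by_contra fun h => ha ⟨haA, h⟩) b ⟨hbA, hbB⟩ (hR hr)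
      · intro h
        obtain ⟨x, hx⟩ := hcon.1
        exact (h.symm ▸ hBA hx : x ∈ A \ B).2 hx
  set X : Set V → Set (Set V) := fun A => {B | B ∈ M ∧ ¬ Nested A B} with hX
  have hXf : ∀ A ∈ M, (X A).Finite := fun A hA =>
    (finite_crossing hR hc k (hfin A hA.1)).subset fun B hB =>
      ⟨hB.2, hconn B hB.1, hconn _ (hMc B hB.1), hfin B hB.1.1, hB.1.2⟩
  obtain ⟨A, hA, hAmin⟩ := exists_minimalFor_of_wellFoundedLT (· ∈ M)
    (fun A => (X A).ncard) ⟨A₀, hA₀, rfl⟩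
  replace hAmin : ∀ B ∈ M, (X A).ncard ≤ (X B).ncard := fun B hB =>
    (le_total _ _).elim id (fun h => hAmin hB h)
  have key : ∀ B ∈ M, (X B).ncard ≤ (X A).ncard → ¬ Nested A B → A ∩ B ∈ W → A ∪ B ∈ W →
      False := by
    intro B hB hBA hn hC hD
    have hsm := cutEdges_submodular (hfin A hA.1) (hfin B hB.1)
    have h1 := hmin _ hC
    have h2 := hmin _ hD
    have h3 := hA.2
    have h4 := hB.2
    have hCM : A ∩ B ∈ M := ⟨hC, by omega⟩
    have hDM : A ∪ B ∈ M := ⟨hD, by omega⟩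
    have n1 : (A ∩ B).Nonempty := Set.nonempty_iff_ne_empty.2 fun h => hn (Or.inl h)
    have n2 : (Aᶜ ∩ Bᶜ).Nonempty := Set.nonempty_iff_ne_empty.2 fun h =>
      hn (Or.inr (Or.inr (Or.inr h)))
    have hor : ∀ {A B G : Set V}, Nested A G → Nested (A ∩ B) G ∨ Nested (A ∪ B) G := by
      intro A B G h
      unfold Nested at *
      simp only [Set.eq_empty_iff_forall_notMem, Set.mem_inter_iff, Set.mem_compl_iff,
        Set.mem_union] at *
      rcases h with h | h | h | h
      · exact Or.inl (Or.inl (by grind))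
      · exact Or.inl (Or.inr (Or.inl (by grind)))
      · exact Or.inr (Or.inr (Or.inr (Or.inl (by grind))))
      · exact Or.inr (Or.inr (Or.inr (Or.inr (by grind))))
    have hand : ∀ G, Nested A G → Nested B G → Nested (A ∩ B) G ∧ Nested (A ∪ B) G := by
      intro G hGA hGB
      refine ⟨(nested_corners n2 hGA.symm hGB.symm).symm, ?_⟩
      rw [← nested_compl_left, Set.compl_union]
      exact (nested_corners (by simpa using n1) (nested_compl_right.2 hGA.symm)
        (nested_compl_right.2 hGB.symm)).symm
    have hu : X (A ∩ B) ∪ X (A ∪ B) ⊂ X A ∪ X B := by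
      refine (Set.ssubset_iff_of_subset ?_).2 ⟨A, Or.inr ⟨hA, fun h => hn h.symm⟩, ?_⟩
      · rintro G (hG | hG)
        · by_cases h : Nested A G
          · exact Or.inr ⟨hG.1, fun h' => hG.2 (hand G h h').1⟩
          · exact Or.inl ⟨hG.1, h⟩
        · by_cases h : Nested A G
          · exact Or.inr ⟨hG.1, fun h' => hG.2 (hand G h h').2⟩
          · exact Or.inl ⟨hG.1, h⟩
      · rintro (hG | hG)
        · refine hG.2 (Or.inr (Or.inl ?_))
          ext; simp; tauto
        · refine hG.2 (Or.inr (Or.inr (Or.inl ?_)))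
          ext; simp; tauto
    have hi : X (A ∩ B) ∩ X (A ∪ B) ⊆ X A ∩ X B := by
      rintro G ⟨g1, g2⟩
      refine ⟨⟨g1.1, fun h => (hor (B := B) h).elim g1.2 g2.2⟩, g1.1, fun h => ?_⟩
      have := hor (B := A) h
      rw [Set.inter_comm, Set.union_comm] at this
      exact this.elim g1.2 g2.2
    have c1 := Set.ncard_union_add_ncard_inter _ _ (hXf _ hCM) (hXf _ hDM)
    have c2 := Set.ncard_union_add_ncard_inter _ _ (hXf _ hA) (hXf _ hB)
    have c3 := Set.ncard_lt_ncard hu ((hXf _ hA).union (hXf _ hB))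
    have c4 := Set.ncard_le_ncard hi ((hXf _ hA).inter_of_left _)
    have c5 := hAmin _ hCM
    have c6 := hAmin _ hDM
    omega
  refine ⟨A, hA.1, fun σ hσR hσW => ?_⟩
  have hcut : ∀ B, (cutEdges R (σ '' B)).ncard = (cutEdges R B).ncard := by
    intro B
    have : cutEdges R (σ '' B) = Prod.map σ σ '' cutEdges R B := by
      ext ⟨x, y⟩
      simp only [cutEdges, Set.mem_ofPred_eq, Set.mem_image, Prod.exists, Prod.map_apply,
        Prod.mk.injEq]
      constructor
      · rintro ⟨h, ⟨a, ha, rfl⟩, hy⟩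
        refine ⟨a, σ.symm y, ⟨?_, ha, fun h => hy ⟨_, h, by simp⟩⟩, rfl, by simp⟩
        rw [← hσR]
        simpa using h
      · rintro ⟨a, b, ⟨h, ha, hb⟩, rfl, rfl⟩
        exact ⟨(hσR _ _).2 h, ⟨a, ha, rfl⟩, by simpa using hb⟩
    rw [this, Set.ncard_image_of_injective _ (σ.injective.prodMap σ.injective)]
  have hσM : ∀ B, σ '' B ∈ M ↔ B ∈ M := fun B => by
    simp only [hM, Set.mem_ofPred_eq, hσW, hcut]
  have hXσ : (X (σ '' A)).ncard ≤ (X A).ncard := by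
    have : X (σ '' A) ⊆ (fun B => σ '' B) '' X A := by
      rintro B ⟨hB, hn⟩
      have hB' : B = σ '' (σ.symm '' B) := by simp [Set.image_image]
      refine ⟨σ.symm '' B, ⟨(hσM _).1 (hB' ▸ hB), fun h => hn ?_⟩, hB'.symm⟩
      rw [hB']
      exact h.image σ
    exact (Set.ncard_le_ncard this ((hXf A hA).image _)).trans (Set.ncard_image_le (hXf A hA))
  by_contra hn
  rcases hcorner A hA.1 (σ '' A) ((hσM A).2 hA).1 with ⟨h1, h2⟩ | ⟨h1, h2⟩
  · exact key _ ((hσM A).2 hA) hXσ hn h1 h2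
  · refine key _ (hMc _ ((hσM A).2 hA)) ?_ (fun h => hn (nested_compl_right.1 h)) h1 h2
    simpa only [hX, nested_compl_left] using hXσ

end Cuts

section AlmostInvariant

open scoped Pointwise

variable {F : Type*} [Group F]

/-- The difference of the indicator functions of `A g⁻¹` and `A`. -/
noncomputable def shiftDiff (A : Set F) (g a : F) : ℤ :=
  A.indicator 1 (a * g) - A.indicator 1 a

/-- A subset of a group is almost invariant if it differs from each of its right translates by a
finite set. -/
def AlmostInv (A : Set F) : Prop := ∀ g, (Function.support (shiftDiff A g)).Finite

/-- The homomorphism to `ℤ` counting the points by which a right translate exceeds an almost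
invariant set. -/
noncomputable def flux (A : Set F) (g : F) : ℤ := ∑ᶠ a, shiftDiff A g a

lemma mem_support_shiftDiff {A : Set F} {g a : F} :
    a ∈ Function.support (shiftDiff A g) ↔ ¬ (a * g ∈ A ↔ a ∈ A) := by
  classical
  simp only [Function.mem_support, shiftDiff, Set.indicator_apply, Pi.one_apply]
  split_ifs <;> simp_all

lemma support_shiftDiff_mul {A : Set F} (g h : F) :
    Function.support (shiftDiff A (g * h)) ⊆
      (fun a => a * g) ⁻¹' Function.support (shiftDiff A h) ∪ Function.support (shiftDiff A g) := by
  intro a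
  simp only [Set.mem_union, Set.mem_preimage, mem_support_shiftDiff, mul_assoc]
  tauto

lemma almostInv_of_closure {A S : Set F} (hS : Subgroup.closure S = ⊤)
    (h : ∀ s ∈ S, (Function.support (shiftDiff A s)).Finite) : AlmostInv A := by
  intro g
  have hg : g ∈ Subgroup.closure S := hS ▸ Subgroup.mem_top g
  induction hg using Subgroup.closure_induction with
  | mem x hx => exact h x hx
  | one => convert Set.finite_empty; ext a; simp [shiftDiff]
  | mul x y _ _ hx hy =>
    exact ((hy.preimage (mul_left_injective x).injOn).union hx).subset (support_shiftDiff_mul x y)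
  | inv x _ hx =>
    refine (hx.preimage (mul_left_injective x⁻¹).injOn).subset ?_
    intro a
    simp only [Set.mem_preimage, mem_support_shiftDiff, inv_mul_cancel_right]
    tauto

lemma AlmostInv.compl {A : Set F} (h : AlmostInv A) : AlmostInv Aᶜ := fun g =>
  (h g).subset fun a => by
    simp only [mem_support_shiftDiff, Set.mem_compl_iff]
    tauto

lemma AlmostInv.inter {A B : Set F} (h : AlmostInv A) (h' : AlmostInv B) : AlmostInv (A ∩ B) :=
  fun g => ((h g).union (h' g)).subset fun a => by
    simp only [mem_support_shiftDiff, Set.mem_inter_iff, Set.mem_union]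
    tauto

lemma AlmostInv.union {A B : Set F} (h : AlmostInv A) (h' : AlmostInv B) : AlmostInv (A ∪ B) :=
  fun g => ((h g).union (h' g)).subset fun a => by
    simp only [mem_support_shiftDiff, Set.mem_union]
    tauto

lemma shiftDiff_smul (A : Set F) (w g a : F) :
    shiftDiff (w • A) g a = shiftDiff A g (w⁻¹ * a) := by
  classical
  simp [shiftDiff, Set.indicator_apply, Set.mem_smul_set_iff_inv_smul_mem, mul_assoc]

lemma shiftDiff_image (A : Set F) (e : MulAut F) (g a : F) :
    shiftDiff (e '' A) g a = shiftDiff A (e⁻¹ g) (e⁻¹ a) := by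
  classical
  have : ∀ x, x ∈ e '' A ↔ e⁻¹ x ∈ A := fun x =>
    ⟨by rintro ⟨y, hy, rfl⟩; simpa using hy, fun h => ⟨_, h, by simp⟩⟩
  simp only [shiftDiff, Set.indicator_apply, this, map_mul, Pi.one_apply]

lemma AlmostInv.smul {A : Set F} (h : AlmostInv A) (w : F) : AlmostInv (w • A) := by
  intro g
  have : shiftDiff (w • A) g = shiftDiff A g ∘ Equiv.mulLeft w⁻¹ := by
    ext a; simp [shiftDiff_smul]
  rw [this, Function.support_comp_eq_preimage]
  exact (h g).preimage (Equiv.injective _).injOn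

lemma AlmostInv.image {A : Set F} (h : AlmostInv A) (e : MulAut F) : AlmostInv (e '' A) := by
  intro g
  have : shiftDiff (e '' A) g = shiftDiff A (e⁻¹ g) ∘ (e⁻¹ : MulAut F) := by
    ext a; simp [shiftDiff_image]
  rw [this, Function.support_comp_eq_preimage]
  exact (h _).preimage (e⁻¹).injective.injOn

lemma flux_smul (A : Set F) (w g : F) : flux (w • A) g = flux A g := by
  simp only [flux, shiftDiff_smul]
  exact finsum_comp_equiv (Equiv.mulLeft w⁻¹)

lemma flux_image (A : Set F) (e : MulAut F) (g : F) : flux (e '' A) g = flux A (e⁻¹ g) := by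
  simp only [flux, shiftDiff_image]
  exact finsum_comp_equiv (e⁻¹ : MulAut F).toEquiv

lemma flux_empty (g : F) : flux (∅ : Set F) g = 0 := by
  simp [flux, shiftDiff]

lemma flux_one (A : Set F) : flux A 1 = 0 := by
  simp [flux, shiftDiff]

lemma flux_mul {A : Set F} (hA : AlmostInv A) (g h : F) :
    flux A (g * h) = flux A g + flux A h := by
  have h1 : flux A h = ∑ᶠ a, shiftDiff A h (a * g) :=
    (finsum_comp_equiv (Equiv.mulRight g)).symm
  rw [h1, flux, flux, ← finsum_add_distrib (hA g) ((hA h).preimage (mul_left_injective g).injOn)]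
  refine finsum_congr fun a => ?_
  simp only [shiftDiff, mul_assoc]
  ring

lemma flux_compl (A : Set F) (g : F) : flux Aᶜ g = - flux A g := by
  classical
  rw [flux, flux, ← finsum_neg_distrib]
  refine finsum_congr fun a => ?_
  simp only [shiftDiff, Set.indicator_apply, Set.mem_compl_iff, Pi.one_apply]
  split_ifs <;> simp_all

lemma flux_disjoint_union {A B : Set F} (hA : AlmostInv A) (hB : AlmostInv B) (h : Disjoint A B)
    (g : F) : flux (A ∪ B) g = flux A g + flux B g := by
  classical
  rw [flux, flux, flux, ← finsum_add_distrib (hA g) (hB g)]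
  refine finsum_congr fun a => ?_
  have h' : ∀ x, x ∈ A → x ∉ B := fun x hx => Set.disjoint_left.1 h hx
  have h1 := h' a
  have h2 := h' (a * g)
  simp only [shiftDiff, Set.indicator_apply, Set.mem_union, Pi.one_apply]
  split_ifs <;> simp_all

lemma flux_inter_add {A B : Set F} (hA : AlmostInv A) (hB : AlmostInv B) (g : F) :
    flux (A ∩ B) g + flux (A ∩ Bᶜ) g = flux A g := by
  rw [← flux_disjoint_union (hA.inter hB) (hA.inter hB.compl), Set.inter_union_compl]
  exact Set.disjoint_left.2 fun x hx hx' => hx'.2 hx.2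

/-- In a torsion-free group, an almost invariant set with nonzero flux has trivial stabilizer:
the stabilizer acts freely on the finite nonempty set counted by the flux. -/
lemma AlmostInv.smul_eq_self [IsMulTorsionFree F] {A : Set F} (hA : AlmostInv A) {g : F}
    (hg : flux A g ≠ 0) {w : F} (hw : w • A = A) : w = 1 := by
  by_contra hne
  have hmem : ∀ x, w * x ∈ A ↔ x ∈ A := fun x => by
    conv_lhs => rw [← hw]
    exact Set.smul_mem_smul_set_iff
  obtain ⟨a, ha⟩ : (Function.support (shiftDiff A g)).Nonempty := by
    by_contra h
    rw [Set.not_nonempty_iff_eq_empty, Function.support_eq_empty_iff] at h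
    exact hg (by simp [flux, h])
  have hk : ∀ k : ℕ, w ^ k * a ∈ Function.support (shiftDiff A g) := by
    intro k
    induction k with
    | zero => simpa using ha
    | succ k ih =>
      rw [mem_support_shiftDiff] at ih ⊢
      rw [pow_succ', mul_assoc w, mul_assoc w, hmem, hmem]
      exact ih
  refine Set.infinite_of_injective_forall_mem (f := fun k : ℕ => w ^ k * a) ?_ hk (hA g)
  exact (mul_left_injective a).comp
    (injective_pow_iff_not_isOfFinOrder.2 (not_isOfFinOrder_of_isMulTorsionFree hne))

end AlmostInvariant

section NestedCut

open scoped Pointwise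

variable {F : Type*} [Group F]

lemma almostInv_iff_finite_cutEdges {X : Set F} (hX : X.Finite) (hinv : ∀ x ∈ X, x⁻¹ ∈ X)
    (hgen : Subgroup.closure X = ⊤) (A : Set F) :
    AlmostInv A ↔ (cutEdges (fun a b => a⁻¹ * b ∈ X) A).Finite := by
  constructor
  · intro hA
    refine (hX.biUnion fun x _ => (hA x).image fun a => (a, a * x)).subset ?_
    rintro ⟨a, b⟩ ⟨hab, ha, hb⟩
    refine Set.mem_biUnion hab ⟨a, ?_, by simp⟩
    rw [mem_support_shiftDiff]
    simpa [ha] using hb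
  · intro h
    refine almostInv_of_closure hgen fun x hx =>
      ((h.image Prod.fst).union (h.image Prod.snd)).subset fun a ha => ?_
    rw [mem_support_shiftDiff] at ha
    by_cases haA : a ∈ A
    · exact Or.inl ⟨(a, a * x), ⟨by simpa using hx, haA, by tauto⟩, rfl⟩
    · exact Or.inr ⟨(a * x, a), ⟨by simpa using hinv x hx, by tauto, haA⟩, rfl⟩

lemma connOn_cayley {X : Set F} (hinv : ∀ x ∈ X, x⁻¹ ∈ X) (hgen : Subgroup.closure X = ⊤) :
    ConnOn (fun a b : F => a⁻¹ * b ∈ X) Set.univ := by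
  intro B _ hB
  rcases B.eq_empty_or_nonempty with h | ⟨b, hb⟩
  · exact Or.inl h
  refine Or.inr (Set.eq_univ_of_forall fun y => ?_)
  have hstep : ∀ x ∈ X, ∀ c ∈ B, c * x ∈ B := fun x hx c hc => by
    by_contra h
    exact hB c hc (c * x) ⟨trivial, h⟩ (by simpa using hx)
  have hy : b⁻¹ * y ∈ Subgroup.closure X := hgen ▸ Subgroup.mem_top _
  have : ∀ g ∈ Subgroup.closure X, b * g ∈ B := by
    intro g hg
    induction hg using Subgroup.closure_induction_right with
    | one => simpa using hb
    | mul_right x _ y hy ih => rw [← mul_assoc]; exact hstep y hy _ ih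
    | mul_inv_cancel x _ y hy ih => rw [← mul_assoc]; exact hstep _ (hinv y hy) _ ih
  simpa using this _ hy

/-- If some almost invariant set has flux not fixed by the automorphism `f` of finite order, there
is such a set which moreover is nested with its images under translations and powers of `f`. -/
theorem exists_nested_almostInv {S : Set F} (hS : S.Finite) (hgen : Subgroup.closure S = ⊤)
    {f : MulAut F} (hf : IsOfFinOrder f) {A₀ : Set F} (hA₀ : AlmostInv A₀)
    (hne : ∃ g, flux A₀ (f g) ≠ flux A₀ g) :
    ∃ A : Set F, AlmostInv A ∧ (∃ g, flux A (f g) ≠ flux A g) ∧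
      ∀ w : F, ∀ e ∈ Subgroup.zpowers f, Nested A (w • (e '' A)) := by
  set X : Set F := {x | ∃ e ∈ Subgroup.zpowers f, ∃ s ∈ S ∪ S⁻¹, e s = x} with hX
  have hXf : X.Finite := by
    have h1 : (Subgroup.zpowers f : Set (MulAut F)).Finite :=
      (Set.finite_coe_iff (s := (Subgroup.zpowers f : Set (MulAut F)))).1
        (finite_zpowers.2 hf)
    refine ((h1.prod (hS.union hS.inv)).image fun p => p.1 p.2).subset ?_
    rintro x ⟨e, he, s, hs, rfl⟩
    exact ⟨(e, s), ⟨he, hs⟩, rfl⟩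
  have hinv : ∀ x ∈ X, x⁻¹ ∈ X := by
    rintro x ⟨e, he, s, hs, rfl⟩
    refine ⟨e, he, s⁻¹, ?_, by simp⟩
    rcases hs with hs | hs
    · exact Or.inr (by simpa using hs)
    · exact Or.inl hs
  have hgenX : Subgroup.closure X = ⊤ := by
    rw [eq_top_iff, ← hgen]
    exact Subgroup.closure_mono fun s hs => ⟨1, one_mem _, s, Or.inl hs, rfl⟩
  have hXe : ∀ e ∈ Subgroup.zpowers f, ∀ x, e x ∈ X ↔ x ∈ X := by
    have : ∀ e ∈ Subgroup.zpowers f, ∀ x, x ∈ X → e x ∈ X := by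
      rintro e he x ⟨e', he', s, hs, rfl⟩
      exact ⟨e * e', mul_mem he he', s, hs, rfl⟩
    intro e he x
    refine ⟨fun h => ?_, this e he x⟩
    simpa using this _ (inv_mem he) _ h
  set κ : Set F → F → ℤ := fun A g => flux A (f g) - flux A g with hκ
  have hmod : ∀ {A B}, AlmostInv A → AlmostInv B → κ (A ∩ B) + κ (A ∩ Bᶜ) = κ A := by
    intro A B hA hB
    ext g
    have h1 := flux_inter_add hA hB g
    have h2 := flux_inter_add hA hB (f g)
    simp only [hκ, Pi.add_apply]
    linarith
  have hκc : ∀ A, κ Aᶜ = - κ A := by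
    intro A
    ext g
    simp only [hκ, Pi.neg_apply, flux_compl]
    ring
  set W : Set (Set F) := {A | AlmostInv A ∧ κ A ≠ 0} with hW
  have hWiff : ∀ A, (∃ g, flux A (f g) ≠ flux A g) ↔ κ A ≠ 0 := by
    intro A
    rw [Function.ne_iff]
    simp [hκ, sub_eq_zero]
  obtain ⟨A, hA, hn⟩ := exists_nested_cut (R := fun a b : F => a⁻¹ * b ∈ X) (W := W)
    (fun x y h => by simpa using hinv _ h) (connOn_cayley hinv hgenX)
    ⟨A₀, hA₀, (hWiff A₀).1 hne⟩
    (fun A hA => (almostInv_iff_finite_cutEdges hXf hinv hgenX A).1 hA.1)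
    (fun A hA => ⟨hA.1.compl, by rw [hκc]; exact neg_ne_zero.2 hA.2⟩)
    (fun h => h.2 (by ext g; simp [hκ, flux_empty]))
    (by
      intro A hA B hBA hB
      have hAB : AlmostInv B := by
        rw [almostInv_iff_finite_cutEdges hXf hinv hgenX]
        refine ((almostInv_iff_finite_cutEdges hXf hinv hgenX A).1 hA.1).subset ?_
        rintro ⟨x, y⟩ ⟨h, hx, hy⟩
        exact ⟨h, hBA hx, fun hyA => hB x hx y ⟨hyA, hy⟩ h⟩
      have h1 := hmod hA.1 hAB
      rw [Set.inter_eq_right.2 hBA, ← Set.sdiff_eq] at h1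
      by_contra hcon
      have h2 : κ B = 0 := by_contra fun h => hcon (Or.inl ⟨hAB, h⟩)
      have h3 : κ (A \ B) = 0 := by_contra fun h =>
        hcon (Or.inr ⟨Set.sdiff_eq A B ▸ hA.1.inter hAB.compl, h⟩)
      exact hA.2 (by rw [← h1, h2, h3, add_zero]))
    (by
      intro A hA B hB
      have h1 := hmod hA.1 hB.1
      have h2 := hmod hB.1 hA.1
      have h3 := hmod hA.1.compl hB.1
      rw [Set.inter_comm B A, Set.inter_comm B Aᶜ] at h2
      have h4 : κ (A ∪ B) = - κ (Aᶜ ∩ Bᶜ) := by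
        rw [← hκc, Set.compl_inter, compl_compl, compl_compl]
      have h5 : κ (A ∪ Bᶜ) = - κ (Aᶜ ∩ B) := by
        rw [← hκc, Set.compl_inter, compl_compl]
      rw [hκc] at h3
      have hA0 := hA.2
      have hB0 := hB.2
      by_contra hcon
      rw [not_or, not_and_or, not_and_or] at hcon
      have a1 : A ∩ B ∉ W → κ (A ∩ B) = 0 := fun h =>
        by_contra fun h' => h ⟨hA.1.inter hB.1, h'⟩
      have a2 : A ∪ B ∉ W → κ (Aᶜ ∩ Bᶜ) = 0 := fun h =>
        by_contra fun h' => h ⟨hA.1.union hB.1, by rw [h4]; exact neg_ne_zero.2 h'⟩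
      have a3 : A ∩ Bᶜ ∉ W → κ (A ∩ Bᶜ) = 0 := fun h =>
        by_contra fun h' => h ⟨hA.1.inter hB.1.compl, h'⟩
      have a4 : A ∪ Bᶜ ∉ W → κ (Aᶜ ∩ B) = 0 := fun h =>
        by_contra fun h' => h ⟨hA.1.union hB.1.compl, by rw [h5]; exact neg_ne_zero.2 h'⟩
      rcases hcon with ⟨c1 | c1, c2 | c2⟩
      · rw [a1 c1, a3 c2] at h1
        exact hA0 (by rw [← h1, add_zero])
      · rw [a1 c1, a4 c2] at h2
        exact hB0 (by rw [← h2, add_zero])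
      · rw [a2 c1, add_zero] at h3
        rw [a3 c2, add_zero] at h1
        rw [h1, h3] at h2
        exact hB0 (by rw [← h2, add_neg_cancel])
      · rw [a2 c1, a4 c2, add_zero] at h3
        exact hA0 (neg_eq_zero.1 h3.symm))
  refine ⟨A, hA.1, (hWiff A).2 hA.2, fun w e he => ?_⟩
  have himg : ∀ B : Set F, (e.toEquiv.trans (Equiv.mulLeft w) : Equiv.Perm F) '' B =
      w • (e '' B) := by
    intro B
    rw [← Set.image_smul, Set.image_image]
    rfl
  have hcomm : ∀ g, e⁻¹ (f g) = f (e⁻¹ g) := by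
    intro g
    obtain ⟨k, hk⟩ := inv_mem he
    have : e⁻¹ * f = f * e⁻¹ := by
      rw [← hk]
      exact ((Commute.refl f).zpow_left k).eq
    exact DFunLike.congr_fun this g
  have hWimg : ∀ B, B ∈ W → ∀ w : F, ∀ e : MulAut F, (∀ g, e⁻¹ (f g) = f (e⁻¹ g)) →
      w • (e '' B) ∈ W := by
    intro B hB w e hcomm
    refine ⟨(hB.1.image e).smul w, fun h => hB.2 ?_⟩
    ext g
    have := congrFun h (e g)
    simpa [hκ, flux_smul, flux_image, hcomm] using this
  rw [← himg]
  refine hn _ (fun x y => ?_) fun B => ⟨fun h => ?_, fun h => ?_⟩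
  · change (w * e x)⁻¹ * (w * e y) ∈ X ↔ _
    rw [← hXe e he (x⁻¹ * y)]
    simp [mul_assoc]
  · rw [himg] at h
    have := hWimg _ h (e⁻¹ w⁻¹) e⁻¹ (fun g => by
      rw [inv_inv]
      apply (e⁻¹).injective
      rw [hcomm]; simp)
    convert this using 1
    ext x
    simp only [Set.mem_smul_set_iff_inv_smul_mem, smul_eq_mul, Set.mem_image]
    constructor
    · intro hx
      refine ⟨w * e x, ?_, by simp⟩
      exact ⟨x, hx, by simp⟩
    · rintro ⟨y, ⟨z, hz, hzy⟩, hy⟩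
      have hy' : y = w * e x := by simpa using congrArg e hy
      have : z = x := e.injective (by rw [hzy, hy', inv_mul_cancel_left])
      exact this ▸ hz
  · rw [himg]
    exact hWimg B h w e hcomm

end NestedCut

section CutSystem

open scoped Pointwise

variable {F : Type*} [Group F] {ι : Type*}

/-- The elements of the group which are not separated from `1` by a translate of `A`. -/
def sideStab (A : Set F) : Subgroup F where
  carrier := {g | ∀ w : F, g ∈ w • A ↔ (1 : F) ∈ w • A}
  one_mem' := fun _ => Iff.rfl
  mul_mem' := by
    intro g h hg hh w
    have := hh (g⁻¹ * w)
    rw [← hg w]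
    simpa [Set.mem_smul_set_iff_inv_smul_mem, mul_assoc] using this
  inv_mem' := by
    intro g hg w
    have := hg (g * w)
    simpa [Set.mem_smul_set_iff_inv_smul_mem, mul_assoc] using this.symm

lemma mem_sideStab {A : Set F} {g : F} :
    g ∈ sideStab A ↔ ∀ w : F, g ∈ w • A ↔ (1 : F) ∈ w • A := Iff.rfl

/-- The translates of the members of a family of sets, and their complements. -/
def IsCut (E : ι → Set F) (C : Set F) : Prop := ∃ (w : F) (i : ι), C = w • E i ∨ C = (w • E i)ᶜ

/-- The cuts separating `x` from `y`. -/
def sep (E : ι → Set F) (x y : F) : Set (Set F) := {C | IsCut E C ∧ x ∉ C ∧ y ∈ C}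

/-- The cut `C` is maximal among the cuts which do not contain `x`. -/
def Adj (E : ι → Set F) (C : Set F) (x : F) : Prop :=
  IsCut E C ∧ x ∉ C ∧ ∀ D, IsCut E D → x ∉ D → C ⊆ D → D = C

/-- A family of representatives of a nested family of almost invariant sets, all of which are
adjacent to the base point `1`. -/
structure CutSystem (E : ι → Set F) : Prop where
  almostInv : ∀ i, AlmostInv (E i)
  nested : ∀ i j (w : F), Nested (E i) (w • E j)
  adj_one : ∀ i, Adj E (E i) 1
  smul_inj : ∀ {v w : F} {i j : ι}, v • E i = w • E j → v = w ∧ i = j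
  smul_ne_compl : ∀ (v w : F) (i j : ι), v • E i ≠ (w • E j)ᶜ

variable {E : ι → Set F}

lemma isCut_smul_self (w : F) (i : ι) : IsCut E (w • E i) := ⟨w, i, Or.inl rfl⟩

lemma IsCut.compl {C : Set F} (h : IsCut E C) : IsCut E Cᶜ := by
  obtain ⟨w, i, rfl | rfl⟩ := h
  · exact ⟨w, i, Or.inr rfl⟩
  · exact ⟨w, i, Or.inl (compl_compl _)⟩

lemma IsCut.smul {C : Set F} (h : IsCut E C) (v : F) : IsCut E (v • C) := by
  obtain ⟨w, i, rfl | rfl⟩ := h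
  · exact ⟨v * w, i, Or.inl (mul_smul v w _).symm⟩
  · exact ⟨v * w, i, Or.inr (by rw [Set.smul_set_compl, mul_smul])⟩

lemma Adj.smul {C : Set F} {x : F} (h : Adj E C x) (v : F) : Adj E (v • C) (v * x) := by
  refine ⟨h.1.smul v, fun hx => h.2.1 ?_, fun D hD hx hCD => ?_⟩
  · simpa [Set.mem_smul_set_iff_inv_smul_mem] using hx
  · have := h.2.2 (v⁻¹ • D) (hD.smul _) (fun h' => hx ?_) ?_
    · rw [← this, smul_inv_smul]
    · simpa [Set.mem_smul_set_iff_inv_smul_mem] using h'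
    · rw [Set.subset_smul_set_iff, inv_inv]
      exact hCD

lemma smul_mem_sep {C : Set F} {x y : F} (v : F) (h : C ∈ sep E x y) :
    v • C ∈ sep E (v * x) (v * y) := by
  refine ⟨h.1.smul v, fun hx => h.2.1 ?_, ?_⟩
  · simpa [Set.mem_smul_set_iff_inv_smul_mem] using hx
  · simpa [Set.mem_smul_set_iff_inv_smul_mem] using h.2.2

lemma sep_smul (v x y : F) : sep E (v * x) (v * y) = (fun C => v • C) '' sep E x y := by
  ext C
  constructor
  · intro h
    refine ⟨v⁻¹ • C, ?_, by simp⟩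
    simpa using smul_mem_sep v⁻¹ h
  · rintro ⟨D, hD, rfl⟩
    exact smul_mem_sep v hD

lemma compl_mem_sep {C : Set F} {x y : F} (h : C ∈ sep E x y) : Cᶜ ∈ sep E y x :=
  ⟨h.1.compl, fun h' => h' h.2.2, h.2.1⟩

lemma sep_one_eq_empty {g : F} : sep E 1 g = ∅ ↔ g ∈ ⨅ i, sideStab (E i) := by
  simp only [Subgroup.mem_iInf, mem_sideStab]
  constructor
  · intro h i w
    by_contra hne
    by_cases h1 : (1 : F) ∈ w • E i
    · have : (w • E i)ᶜ ∈ sep E 1 g :=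
        ⟨(isCut_smul_self w i).compl, fun h => h h1, fun h => hne (by tauto)⟩
      simp [h] at this
    · have : w • E i ∈ sep E 1 g := ⟨isCut_smul_self w i, h1, by tauto⟩
      simp [h] at this
  · intro h
    refine Set.eq_empty_of_forall_notMem ?_
    rintro C ⟨⟨w, i, rfl | rfl⟩, h1, hg⟩
    · exact h1 ((h i w).1 hg)
    · exact hg ((h i w).2 (by simpa using h1))

lemma flux_eq_finsum (A : Set F) (g : F) :
    flux A g = ∑ᶠ w : F, ((w • A).indicator 1 g - (w • A).indicator 1 1 : ℤ) := by
  classical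
  rw [flux]
  refine (finsum_comp_equiv (Equiv.inv F)).symm.trans (finsum_congr fun w => ?_)
  simp [shiftDiff, Set.indicator_apply, Set.mem_smul_set_iff_inv_smul_mem]

lemma flux_eq_zero_of_mem_sideStab {A : Set F} {g : F} (h : g ∈ sideStab A) : flux A g = 0 := by
  classical
  rw [flux_eq_finsum]
  refine finsum_eq_zero_of_forall_eq_zero fun w => ?_
  simp [Set.indicator_apply, mem_sideStab.1 h w]

lemma compl_adj_of_sep {C : Set F} {x y : F} (h : sep E x y = {C}) : Adj E Cᶜ y := by
  have hC : C ∈ sep E x y := by rw [h]; rfl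
  refine ⟨hC.1.compl, fun h => h hC.2.2, fun D hD hy hCD => ?_⟩
  have : Dᶜ ∈ sep E x y := ⟨hD.compl, fun hx => hx (hCD hC.2.1), hy⟩
  rw [h, Set.mem_singleton_iff] at this
  rw [← this, compl_compl]

lemma sep_subset {x y z : F} (h : sep E x y ⊆ sep E x z) :
    sep E y z ⊆ sep E x z \ sep E x y := by
  intro D hD
  by_cases hx : x ∈ D
  · exact absurd hD.2.2 (h ⟨hD.1.compl, fun h => h hx, hD.2.1⟩).2.2
  · exact ⟨⟨hD.1, hx, hD.2.2⟩, fun hDy => hD.2.1 hDy.2.2⟩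

lemma sep_one_inv {x : F} {i : ι} (h : sep E 1 x = {(x • E i)ᶜ}) : sep E 1 x⁻¹ = {E i} := by
  have h1 : sep E x 1 = {x • E i} := by
    ext D
    rw [Set.mem_singleton_iff]
    constructor
    · intro hD
      have := compl_mem_sep hD
      rw [h, Set.mem_singleton_iff] at this
      exact compl_injective this
    · rintro rfl
      have : (x • E i)ᶜ ∈ sep E 1 x := by rw [h]; rfl
      simpa using compl_mem_sep this
  have := sep_smul (E := E) x⁻¹ x 1
  rw [h1] at this
  simpa using this

/-- Elements in the same position relative to all cuts differ by an element of the base group. -/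
lemma inv_mul_mem_of_sep {C : Set F} {x y : F} (hx : sep E 1 x = {C}) (hy : sep E 1 y = {C}) :
    x⁻¹ * y ∈ ⨅ i, sideStab (E i) := by
  rw [← sep_one_eq_empty]
  have h2 := sep_subset (hx.trans hy.symm).subset
  rw [hx, hy, Set.sdiff_self, Set.subset_empty_iff] at h2
  have := sep_smul (E := E) x⁻¹ x y
  rw [h2] at this
  simpa using this

lemma sep_mul_left {x : F} (hx : x ∈ ⨅ i, sideStab (E i)) (g : F) :
    sep E 1 (x * g) = (fun C => x • C) '' sep E 1 g := by
  rw [← sep_smul, mul_one]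
  ext C
  have : ∀ C, IsCut E C → (x ∈ C ↔ (1 : F) ∈ C) := by
    rintro C ⟨w, i, rfl | rfl⟩
    · exact (Subgroup.mem_iInf.1 hx i) w
    · exact not_congr ((Subgroup.mem_iInf.1 hx i) w)
  exact ⟨fun h => ⟨h.1, fun h' => h.2.1 ((this C h.1).1 h'), h.2.2⟩,
    fun h => ⟨h.1, fun h' => h.2.1 ((this C h.1).2 h'), h.2.2⟩⟩

lemma finite_sep [Finite ι] (hE : ∀ i, AlmostInv (E i)) (x y : F) : (sep E x y).Finite := by
  have h1 : ∀ i, ((fun w : F => w • E i) '' {w | ¬ (y ∈ w • E i ↔ x ∈ w • E i)}).Finite := by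
    intro i
    refine Set.Finite.image _ ?_
    have := ((hE i (x⁻¹ * y)).image fun a => x * a⁻¹)
    refine this.subset ?_
    intro w hw
    refine ⟨w⁻¹ * x, ?_, by simp⟩
    rw [mem_support_shiftDiff]
    simpa [Set.mem_smul_set_iff_inv_smul_mem, mul_assoc] using hw
  have h2 := Set.finite_iUnion h1
  refine (h2.union (h2.image Compl.compl)).subset ?_
  rintro C ⟨⟨w, i, rfl | rfl⟩, hx, hy⟩
  · exact Or.inl (Set.mem_iUnion.2 ⟨i, w, fun h => hx (h.1 hy), rfl⟩)
  · exact Or.inr ⟨_, Set.mem_iUnion.2 ⟨i, w, fun h => hy (h.2 (by simpa using hx)), rfl⟩, rfl⟩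

lemma exists_adj [Finite ι] (hE : ∀ i, AlmostInv (E i)) {x y : F} (hne : (sep E x y).Nonempty) :
    ∃ C ∈ sep E x y, Adj E C x := by
  obtain ⟨C, hC⟩ := (finite_sep hE x y).exists_maximal hne
  exact ⟨C, hC.1, hC.1.1, hC.1.2.1, fun D hD hx hCD =>
    (hC.2 ⟨hD, hx, hCD hC.1.2.2⟩ hCD).antisymm hCD⟩

namespace CutSystem

lemma nested_of_isCut (S : CutSystem E) {C D : Set F} (hC : IsCut E C) (hD : IsCut E D) :
    Nested C D := by
  have key : ∀ (v w : F) (i j : ι), Nested (v • E i) (w • E j) := by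
    intro v w i j
    have := (S.nested i j (v⁻¹ * w)).image (Equiv.mulLeft v)
    have h : w • E j = v • ((v⁻¹ * w) • E j) := by rw [smul_smul, mul_inv_cancel_left]
    rw [h]
    exact this
  obtain ⟨v, i, rfl | rfl⟩ := hC <;> obtain ⟨w, j, rfl | rfl⟩ := hD <;>
    simp only [nested_compl_left, nested_compl_right, key]

lemma sep_finite (S : CutSystem E) [Finite ι] (x y : F) : (sep E x y).Finite :=
  finite_sep S.almostInv x y

lemma subset_or_subset (S : CutSystem E) {C D : Set F} {x y : F} (hC : C ∈ sep E x y)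
    (hD : D ∈ sep E x y) :
    C ⊆ D ∨ D ⊆ C := by
  rcases S.nested_of_isCut hC.1 hD.1 with h | h | h | h
  · exact absurd (h ▸ ⟨hC.2.2, hD.2.2⟩ : y ∈ (∅ : Set F)) (Set.notMem_empty y)
  · exact Or.inl (Set.sdiff_eq_empty.1 h)
  · exact Or.inr (Set.sdiff_eq_empty.1 (by rw [Set.sdiff_eq, Set.inter_comm]; exact h))
  · exact absurd (h ▸ ⟨hC.2.1, hD.2.1⟩ : x ∈ (∅ : Set F)) (Set.notMem_empty x)

lemma adj_smul_self (S : CutSystem E) (w : F) (i : ι) : Adj E (w • E i) w := by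
  simpa using (S.adj_one i).smul w

lemma disjoint_of_adj (S : CutSystem E) {C D : Set F} {x : F} (hC : Adj E C x)
    (hD : Adj E D x) (h : C ≠ D) :
    Disjoint C D := by
  rw [Set.disjoint_iff_inter_eq_empty]
  rcases S.nested_of_isCut hC.1 hD.1 with h' | h' | h' | h'
  · exact h'
  · exact absurd (hC.2.2 D hD.1 hD.2.1 (Set.sdiff_eq_empty.1 h')).symm h
  · exact absurd (hD.2.2 C hC.1 hC.2.1
      (Set.sdiff_eq_empty.1 (by rw [Set.sdiff_eq, Set.inter_comm]; exact h'))) h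
  · exact absurd (h' ▸ ⟨hC.2.1, hD.2.1⟩ : x ∈ (∅ : Set F)) (Set.notMem_empty x)

lemma sep_eq_empty_of_adj (S : CutSystem E) {C : Set F} {x y : F} (hx : Adj E C x)
    (hy : Adj E C y) :
    sep E x y = ∅ := by
  refine Set.eq_empty_of_forall_notMem fun D hD => ?_
  rcases S.nested_of_isCut hx.1 hD.1 with h | h | h | h
  · have h1 : Dᶜ = C := hy.2.2 Dᶜ hD.1.compl (fun h => h hD.2.2)
      (Set.subset_compl_iff_disjoint_right.2 (Set.disjoint_iff_inter_eq_empty.2 h))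
    exact hx.2.1 (h1 ▸ hD.2.1)
  · have h1 : D = C := hx.2.2 D hD.1 hD.2.1 (Set.sdiff_eq_empty.1 h)
    exact hy.2.1 (h1 ▸ hD.2.2)
  · exact absurd (h ▸ ⟨hy.2.1, hD.2.2⟩ : y ∈ (∅ : Set F)) (Set.notMem_empty y)
  · exact absurd (h ▸ ⟨hx.2.1, hD.2.1⟩ : x ∈ (∅ : Set F)) (Set.notMem_empty x)

/-- The outermost cut separating `1` from `g`. -/
lemma exists_first (S : CutSystem E) [Finite ι] {x y : F} (hne : (sep E x y).Nonempty) :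
    ∃ C ∈ sep E x y, Adj E C x ∧ ∀ D ∈ sep E x y, D ⊆ C := by
  obtain ⟨C, hC, hadj⟩ := exists_adj S.almostInv hne
  refine ⟨C, hC, hadj, fun D hD => ?_⟩
  rcases S.subset_or_subset hC hD with h | h
  · exact (hadj.2.2 D hD.1 hD.2.1 h).subset
  · exact h

lemma sep_compl_smul (S : CutSystem E) {x : F} {i : ι} (h : Adj E (x • E i)ᶜ 1) :
    sep E 1 x = {(x • E i)ᶜ} := by
  have hx := S.adj_smul_self x i
  have hmem : (x • E i)ᶜ ∈ sep E 1 x := ⟨h.1, h.2.1, hx.2.1⟩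
  refine Set.eq_singleton_iff_unique_mem.2 ⟨hmem, fun D hD => ?_⟩
  rcases S.subset_or_subset hmem hD with h' | h'
  · exact h.2.2 D hD.1 hD.2.1 h'
  · rw [← hx.2.2 Dᶜ hD.1.compl (fun h => h hD.2.2) (Set.subset_compl_comm.1 h'), compl_compl]

/-- The first cut separating `1` from `g` either points away from `1` or is crossed by an element
of the group. -/
lemma exists_first_cases (S : CutSystem E) [Finite ι] {g : F} (hg : g ∉ ⨅ i, sideStab (E i)) :
    ∃ C ∈ sep E 1 g, ∃ (i : ι) (x : F), (C = x • E i ∧ x ∈ ⨅ i, sideStab (E i)) ∨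
      (C = (x • E i)ᶜ ∧ sep E 1 x = {C} ∧ sep E 1 x⁻¹ = {E i}) := by
  rw [← sep_one_eq_empty, ← ne_eq, ← Set.nonempty_iff_ne_empty] at hg
  obtain ⟨C, hC, hadj, -⟩ := S.exists_first hg
  obtain ⟨x, i, rfl | rfl⟩ := hC.1
  · exact ⟨_, hC, i, x, Or.inl ⟨rfl, sep_one_eq_empty.1
      (S.sep_eq_empty_of_adj hadj (S.adj_smul_self x i))⟩⟩
  · have h := S.sep_compl_smul hadj
    exact ⟨_, hC, i, x, Or.inr ⟨rfl, h, sep_one_inv h⟩⟩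

lemma ncard_sep_lt (S : CutSystem E) [Finite ι] {y g : F} (h : sep E 1 y ⊆ sep E 1 g)
    (hne : (sep E 1 y).Nonempty) : (sep E 1 (y⁻¹ * g)).ncard < (sep E 1 g).ncard := by
  have h1 : sep E 1 (y⁻¹ * g) = (fun C => y⁻¹ • C) '' sep E y g := by
    rw [← sep_smul, inv_mul_cancel]
  obtain ⟨C, hC⟩ := hne
  rw [h1]
  refine (Set.ncard_image_le (S.sep_finite y g)).trans_lt
    (Set.ncard_lt_ncard ?_ (S.sep_finite 1 g))
  exact (Set.ssubset_iff_of_subset ((sep_subset h).trans Set.sdiff_subset)).2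
    ⟨C, h hC, fun h' => (sep_subset h h').2 hC⟩

/-- Beyond a cut which is not crossed by an element of the group there is a second cut, and behind
it a translate of the base point. -/
lemma exists_second (S : CutSystem E) [Finite ι] {i : ι} (hi : ∀ t, sep E 1 t ≠ {E i}) {g : F}
    (hg : E i ∈ sep E 1 g) :
    ∃ (y : F) (j : ι), sep E 1 y = {E i, (y • E j)ᶜ} ∧ (y • E j)ᶜ ∈ sep E 1 g ∧
      E i ≠ (y • E j)ᶜ ∧ ∀ t, sep E 1 t ≠ {E j} := by
  have hmax : ∀ {y : F} {D}, D ∈ sep E 1 y → E i ∈ sep E 1 y → D ⊆ E i := by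
    intro y D hD hE
    rcases S.subset_or_subset hD hE with h | h
    · exact h
    · exact ((S.adj_one i).2.2 D hD.1 hD.2.1 h).subset
  have hne : (sep E 1 g \ {E i}).Nonempty := by
    rw [Set.sdiff_nonempty]
    exact fun h => hi g (h.antisymm (Set.singleton_subset_iff.2 hg))
  obtain ⟨C, hC⟩ := ((S.sep_finite 1 g).sdiff (t := {E i})).exists_maximal hne
  have hCmem := hC.1.1
  have hCne : C ≠ E i := hC.1.2
  have hCi : C ⊆ E i := hmax hCmem hg
  have hCmax : ∀ D, IsCut E D → (1 : F) ∉ D → C ⊆ D → D ≠ E i → D = C := fun D hD h1 hCD hne =>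
    (hC.2 ⟨⟨hD, h1, hCD hCmem.2.2⟩, hne⟩ hCD).antisymm hCD
  obtain ⟨y, j, hy | hy⟩ := hCmem.1
  · exfalso
    have hadj : Adj E C y := hy ▸ S.adj_smul_self y j
    have hyi : y ∈ E i := by
      by_contra h
      exact hCne (hadj.2.2 (E i) (S.adj_one i).1 h hCi).symm
    have hmem : E i ∈ sep E 1 y := ⟨(S.adj_one i).1, (S.adj_one i).2.1, hyi⟩
    refine hi y (Set.eq_singleton_iff_unique_mem.2 ⟨hmem, fun D hD => ?_⟩)
    by_contra hDi
    rcases S.nested_of_isCut hadj.1 hD.1 with h | h | h | h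
    · have h1 : Dᶜ = C := hadj.2.2 Dᶜ hD.1.compl (fun h => h hD.2.2)
        (Set.subset_compl_iff_disjoint_right.2 (Set.disjoint_iff_inter_eq_empty.2 h))
      exact hCmem.2.1 (h1 ▸ hD.2.1)
    · exact hadj.2.1 (hCmax D hD.1 hD.2.1 (Set.sdiff_eq_empty.1 h) hDi ▸ hD.2.2)
    · exact absurd (h ▸ ⟨hadj.2.1, hD.2.2⟩ : y ∈ (∅ : Set F)) (Set.notMem_empty y)
    · exact absurd (h ▸ ⟨hCmem.2.1, hD.2.1⟩ : (1 : F) ∈ (∅ : Set F)) (Set.notMem_empty _)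
  · have hadj := S.adj_smul_self y j
    have hyC : y ∈ C := hy ▸ hadj.2.1
    have hCy : C ∈ sep E 1 y := ⟨hCmem.1, hCmem.2.1, hyC⟩
    have hEy : E i ∈ sep E 1 y := ⟨(S.adj_one i).1, (S.adj_one i).2.1, hCi hyC⟩
    have hsep : sep E 1 y = {E i, C} := by
      refine Set.Subset.antisymm (fun D hD => ?_) ?_
      · by_cases hDi : D = E i
        · exact Or.inl hDi
        right
        rcases S.subset_or_subset hCy hD with h | h
        · exact hCmax D hD.1 hD.2.1 h hDi
        · have h1 : Dᶜ = y • E j := hadj.2.2 Dᶜ hD.1.compl (fun h => h hD.2.2)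
            (Set.subset_compl_comm.1 (hy ▸ h))
          rw [Set.mem_singleton_iff, hy, ← h1, compl_compl]
      · rintro D (rfl | rfl)
        · exact hEy
        · exact hCy
    refine ⟨y, j, hy ▸ hsep, hy ▸ hCmem, hy ▸ hCne.symm, fun t ht => hi (y * t) ?_⟩
    have hyt : sep E y (y * t) = {y • E j} := by
      have := sep_smul (E := E) y 1 t
      rw [ht] at this
      simpa using this
    have hytj : y * t ∈ y • E j := (by rw [hyt]; rfl : y • E j ∈ sep E y (y * t)).2.2
    refine Set.eq_singleton_iff_unique_mem.2 ⟨⟨(S.adj_one i).1, (S.adj_one i).2.1, ?_⟩, ?_⟩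
    · by_contra h
      have : (E i)ᶜ ∈ sep E y (y * t) := ⟨(S.adj_one i).1.compl, fun h => h (hCi hyC), h⟩
      rw [hyt, Set.mem_singleton_iff] at this
      exact hCne (by rw [hy, ← this, compl_compl])
    · intro D hD
      by_cases hyD : y ∈ D
      · have : D ∈ sep E 1 y := ⟨hD.1, hD.2.1, hyD⟩
        rw [hsep] at this
        rcases this with h | h
        · exact h
        · rw [Set.mem_singleton_iff.1 h, hy] at hD
          exact absurd hytj hD.2.2
      · have : D ∈ sep E y (y * t) := ⟨hD.1, hyD, hD.2.2⟩
        rw [hyt, Set.mem_singleton_iff] at this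
        rw [this] at hD
        exact absurd hD.2.1 (by
          have := hCmem.2.1
          rw [hy] at this
          simpa using this)

lemma mem_sideStab_of_sep (S : CutSystem E) {y x : F} {i k : ι} (hk : k ≠ i)
    (h : sep E 1 y = {x • E i} ∨ sep E 1 y = {(x • E i)ᶜ}) : y ∈ sideStab (E k) := by
  have key : ∀ C ∈ sep E 1 y, ∀ w : F, C ≠ w • E k ∧ C ≠ (w • E k)ᶜ := by
    intro C hC w
    rcases h with h | h <;> rw [h, Set.mem_singleton_iff] at hC <;> rw [hC]
    · exact ⟨fun h => hk (S.smul_inj h).2.symm, S.smul_ne_compl _ _ _ _⟩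
    · exact ⟨(S.smul_ne_compl _ _ _ _).symm, fun h => hk (S.smul_inj (compl_injective h)).2.symm⟩
  intro w
  by_contra hne
  by_cases h1 : (1 : F) ∈ w • E k
  · exact (key (w • E k)ᶜ ⟨(isCut_smul_self w k).compl, fun h => h h1, fun h => hne (by tauto)⟩ w).2
      rfl
  · exact (key (w • E k) ⟨isCut_smul_self w k, h1, by tauto⟩ w).1 rfl

lemma flux_of_sep_pair [DecidableEq ι] (S : CutSystem E) {y : F} {i j : ι}
    (h : sep E 1 y = {E i, (y • E j)ᶜ}) (k : ι) :
    flux (E k) y = (if k = i then 1 else 0) - (if k = j then 1 else 0) := by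
  classical
  have hmem : ∀ C, C ∈ sep E 1 y ↔ C = E i ∨ C = (y • E j)ᶜ := fun C => by rw [h]; rfl
  have h1 : ∀ w : F, ((1 : F) ∉ w • E k ∧ y ∈ w • E k) ↔ w = 1 ∧ k = i := by
    intro w
    have := hmem (w • E k)
    constructor
    · rintro ⟨ha, hb⟩
      rcases this.1 ⟨isCut_smul_self w k, ha, hb⟩ with h' | h'
      · exact S.smul_inj (h'.trans (one_smul F (E i)).symm)
      · exact absurd h' (S.smul_ne_compl _ _ _ _)
    · rintro ⟨rfl, rfl⟩
      exact (this.2 (Or.inl (one_smul _ _))).2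
  have h2 : ∀ w : F, ((1 : F) ∈ w • E k ∧ y ∉ w • E k) ↔ w = y ∧ k = j := by
    intro w
    have := hmem (w • E k)ᶜ
    constructor
    · rintro ⟨ha, hb⟩
      rcases this.1 ⟨(isCut_smul_self w k).compl, fun h => h ha, hb⟩ with h' | h'
      · exact absurd ((one_smul F (E i)).trans h'.symm) (S.smul_ne_compl _ _ _ _)
      · exact S.smul_inj (compl_injective h')
    · rintro ⟨rfl, rfl⟩
      have := (this.2 (Or.inr rfl)).2
      simpa using this
  rw [flux_eq_finsum]
  have h3 : ∀ w : F, ((w • E k).indicator 1 y - (w • E k).indicator 1 1 : ℤ) =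
      (if w = 1 then (if k = i then 1 else 0) else 0) -
      (if w = y then (if k = j then 1 else 0) else 0) := by
    intro w
    have a1 := h1 w
    have a2 := h2 w
    simp only [Set.indicator_apply, Pi.one_apply]
    clear h1 h2 hmem h
    by_cases b1 : (1 : F) ∈ w • E k <;> by_cases b2 : y ∈ w • E k <;> by_cases b3 : w = 1 <;>
      by_cases b4 : w = y <;> by_cases b5 : k = i <;> by_cases b6 : k = j <;>
      simp only [b1, b2, b3, b4, b5, b6] at a1 a2 ⊢ <;> simp_all
  rw [finsum_congr h3, finsum_sub_distrib, finsum_eq_single _ 1 (by simp +contextual),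
    finsum_eq_single _ y (by simp +contextual), if_pos rfl, if_pos rfl]
  · exact (Set.finite_singleton (1 : F)).subset fun w hw => by
      by_contra h
      exact hw (if_neg h)
  · exact (Set.finite_singleton y).subset fun w hw => by
      by_contra h
      exact hw (if_neg h)

/-- If no sum of distinct fluxes vanishes, every cut adjacent to `1` is crossed by an element of
the group. -/
theorem exists_crossing [Finite ι] (S : CutSystem E)
    (hflux : ∀ Z : Finset ι, Z.Nonempty → ∃ g, ∑ k ∈ Z, flux (E k) g ≠ 0) (i : ι) :
    ∃ t, sep E 1 t = {E i} := by
  classical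
  have := Fintype.ofFinite ι
  by_contra hi
  set Z : Finset ι := Finset.univ.filter fun k => ∀ t, sep E 1 t ≠ {E k} with hZ
  have hZmem : ∀ k, k ∈ Z ↔ ∀ t, sep E 1 t ≠ {E k} := fun k => by simp [hZ]
  obtain ⟨g, hg⟩ := hflux Z ⟨i, (hZmem i).2 (by simpa using hi)⟩
  refine hg ?_
  clear hg
  induction hN : (sep E 1 g).ncard using Nat.strong_induction_on generalizing g with
  | _ N ih =>
  by_cases hgH : g ∈ ⨅ i, sideStab (E i)
  · exact Finset.sum_eq_zero fun k _ =>
      flux_eq_zero_of_mem_sideStab (Subgroup.mem_iInf.1 hgH k)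
  suffices hy : ∃ y, sep E 1 y ⊆ sep E 1 g ∧ (sep E 1 y).Nonempty ∧ ∑ k ∈ Z, flux (E k) y = 0 by
    obtain ⟨y, h1, h2, h3⟩ := hy
    have h4 := ih _ (hN ▸ S.ncard_sep_lt h1 h2) (y⁻¹ * g) rfl
    have h5 : ∀ k, flux (E k) g = flux (E k) y + flux (E k) (y⁻¹ * g) := fun k => by
      rw [← flux_mul (S.almostInv k), mul_inv_cancel_left]
    rw [Finset.sum_congr rfl fun k _ => h5 k, Finset.sum_add_distrib, h3, h4, add_zero]
  obtain ⟨C, hC, i, x, ⟨rfl, hx⟩ | ⟨hCx, h1, h2⟩⟩ := S.exists_first_cases hgH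
  · by_cases hiZ : i ∈ Z
    · have hE : E i ∈ sep E 1 (x⁻¹ * g) := by
        rw [sep_mul_left (inv_mem hx)]
        exact ⟨_, hC, inv_smul_smul _ _⟩
      obtain ⟨y, j, hy, hyg, -, hj⟩ := S.exists_second ((hZmem i).1 hiZ) hE
      have hxy : sep E 1 (x * y) ⊆ sep E 1 g := by
        rw [sep_mul_left hx, hy]
        rintro _ ⟨D, hD | hD, rfl⟩
        · rw [hD]; exact hC
        · rw [Set.mem_singleton_iff.1 hD]
          have : g = x * (x⁻¹ * g) := by simp
          rw [this, sep_mul_left hx]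
          exact ⟨_, hyg, rfl⟩
      refine ⟨x * y, hxy, ?_, ?_⟩
      · rw [sep_mul_left hx, hy]
        exact ⟨_, _, Or.inl rfl, rfl⟩
      · have h5 : ∀ k, flux (E k) (x * y) = (if k = i then 1 else 0) - (if k = j then 1 else 0) :=
          fun k => by
            rw [flux_mul (S.almostInv k), S.flux_of_sep_pair hy,
              flux_eq_zero_of_mem_sideStab (Subgroup.mem_iInf.1 hx k), zero_add]
        rw [Finset.sum_congr rfl fun k _ => h5 k, Finset.sum_sub_distrib]
        simp [hiZ, (hZmem j).2 hj]
    · obtain ⟨t, ht⟩ : ∃ t, sep E 1 t = {E i} := by simpa [hZmem] using hiZ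
      have h1 : sep E 1 (x * t) = {x • E i} := by
        rw [sep_mul_left hx, ht, Set.image_singleton]
      refine ⟨x * t, by simpa [h1] using hC, by simp [h1], Finset.sum_eq_zero fun k hk => ?_⟩
      exact flux_eq_zero_of_mem_sideStab (S.mem_sideStab_of_sep
        (by rintro rfl; exact hiZ hk) (Or.inl h1))
  · refine ⟨x, by simpa [h1] using hC, by simp [h1], Finset.sum_eq_zero fun k hk => ?_⟩
    exact flux_eq_zero_of_mem_sideStab (S.mem_sideStab_of_sep
      (by rintro rfl; exact (hZmem k).1 hk x⁻¹ h2) (Or.inr (hCx ▸ h1)))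

/-- An element not separated from `1` by translates of the cuts outside `I` lies in the subgroup
generated by the base group and the elements crossing the cuts in `I`. -/
theorem mem_closure_of_mem_sideStab [Finite ι] (S : CutSystem E) {t : ι → F}
    (ht : ∀ i, sep E 1 (t i) = {E i}) (I : Set ι) {g : F} (hg : ∀ k ∉ I, g ∈ sideStab (E k)) :
    g ∈ (⨅ i, sideStab (E i)) ⊔ Subgroup.closure (t '' I) := by
  set H := ⨅ i, sideStab (E i) with hH
  induction hN : (sep E 1 g).ncard using Nat.strong_induction_on generalizing g with
  | _ N ih =>
  by_cases hgH : g ∈ H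
  · exact Subgroup.mem_sup_left hgH
  suffices hy : ∃ y, sep E 1 y ⊆ sep E 1 g ∧ (sep E 1 y).Nonempty ∧ (∀ k ∉ I, y ∈ sideStab (E k)) ∧
      y ∈ H ⊔ Subgroup.closure (t '' I) by
    obtain ⟨y, h1, h2, h3, h4⟩ := hy
    have h5 := ih _ (hN ▸ S.ncard_sep_lt h1 h2) (g := y⁻¹ * g)
      (fun k hk => mul_mem (inv_mem (h3 k hk)) (hg k hk)) rfl
    simpa using mul_mem h4 h5
  have hI : ∀ i (w : F), (w • E i ∈ sep E 1 g ∨ (w • E i)ᶜ ∈ sep E 1 g) → i ∈ I := by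
    intro i w h
    by_contra hi
    have := hg i hi w
    rcases h with h | h
    · exact h.2.1 (this.1 h.2.2)
    · exact h.2.2 (this.2 (by simpa using h.2.1))
  obtain ⟨C, hC, i, x, ⟨rfl, hx⟩ | ⟨hCx, h1, h2⟩⟩ := S.exists_first_cases hgH
  · have hi := hI i x (Or.inl hC)
    have h1 : sep E 1 (x * t i) = {x • E i} := by
      rw [sep_mul_left hx, ht, Set.image_singleton]
    refine ⟨x * t i, by simpa [h1] using hC, by simp [h1], fun k hk =>
      S.mem_sideStab_of_sep (by rintro rfl; exact hk hi) (Or.inl h1), ?_⟩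
    exact mul_mem (Subgroup.mem_sup_left hx)
      (Subgroup.mem_sup_right (Subgroup.subset_closure ⟨i, hi, rfl⟩))
  · have hi := hI i x (Or.inr (hCx ▸ hC))
    refine ⟨x, by simpa [h1] using hC, by simp [h1], fun k hk =>
      S.mem_sideStab_of_sep (by rintro rfl; exact hk hi) (Or.inr (hCx ▸ h1)), ?_⟩
    have h3 : (t i)⁻¹ * x⁻¹ ∈ H := inv_mul_mem_of_sep (ht i) h2
    have h4 := inv_mem (mul_mem (Subgroup.mem_sup_right (S := H)
      (Subgroup.subset_closure ⟨i, hi, rfl⟩ : t i ∈ Subgroup.closure (t '' I)))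
      (Subgroup.mem_sup_left h3))
    simpa using h4

end CutSystem

end CutSystem

section FreeBasis

open scoped Pointwise

namespace CutSystem

variable {F : Type} [Group F] {ι : Type} {E : ι → Set F} {t : ι → F}

lemma adj_smul_of_mem_iInf {C : Set F} {h : F} (hC : Adj E C 1) (hh : h ∈ ⨅ i, sideStab (E i)) :
    Adj E (h • C) 1 := by
  have key : ∀ D, IsCut E D → (h ∈ D ↔ (1 : F) ∈ D) := by
    rintro D ⟨w, i, rfl | rfl⟩
    · exact (Subgroup.mem_iInf.1 hh i) w
    · exact not_congr ((Subgroup.mem_iInf.1 hh i) w)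
  have := hC.smul h
  rw [mul_one] at this
  exact ⟨this.1, fun h1 => this.2.1 ((key _ this.1).2 h1),
    fun D hD h1 => this.2.2 D hD fun h2 => h1 ((key D hD).1 h2)⟩

lemma compl_eq (i : ι) : (t i)⁻¹ • (E i)ᶜ = ((t i)⁻¹ • E i)ᶜ := Set.smul_set_compl

lemma adj_inv_smul_compl (ht : ∀ i, sep E 1 (t i) = {E i}) (i : ι) :
    Adj E ((t i)⁻¹ • (E i)ᶜ) 1 := by
  simpa using (compl_adj_of_sep (ht i)).smul (t i)⁻¹

lemma disjoint_smul_union (S : CutSystem E) (ht : ∀ i, sep E 1 (t i) = {E i}) {h : F}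
    (hh : h ∈ ⨅ i, sideStab (E i)) {i j : ι} (hij : h ≠ 1 ∨ i ≠ j) :
    Disjoint (h • (E i ∪ (t i)⁻¹ • (E i)ᶜ)) (E j ∪ (t j)⁻¹ • (E j)ᶜ) := by
  have hij' : ¬ (h = 1 ∧ i = j) := by tauto
  rw [Set.smul_set_union]
  have e1 := adj_smul_of_mem_iInf (S.adj_one i) hh
  have b1 := adj_smul_of_mem_iInf (adj_inv_smul_compl ht i) hh
  have e2 := S.adj_one j
  have b2 := adj_inv_smul_compl ht j
  refine Disjoint.union_left (Disjoint.union_right ?_ ?_) (Disjoint.union_right ?_ ?_)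
  · refine S.disjoint_of_adj e1 e2 fun he => hij' (S.smul_inj ?_)
    rwa [one_smul]
  · refine S.disjoint_of_adj e1 b2 ?_
    rw [compl_eq]
    exact S.smul_ne_compl _ _ _ _
  · refine S.disjoint_of_adj b1 e2 ?_
    rw [compl_eq, Set.smul_set_compl, ← mul_smul]
    exact fun he => S.smul_ne_compl 1 _ j i ((one_smul _ _).trans he.symm)
  · refine S.disjoint_of_adj b1 b2 fun he => hij' ?_
    rw [compl_eq, compl_eq, Set.smul_set_compl, ← mul_smul] at he
    obtain ⟨h1, rfl⟩ := S.smul_inj (compl_injective he)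
    exact ⟨by simpa using h1, rfl⟩

lemma disjoint_crossing (S : CutSystem E) (ht : ∀ i, sep E 1 (t i) = {E i}) (i : ι) :
    Disjoint (E i) ((t i)⁻¹ • (E i)ᶜ) := by
  refine S.disjoint_of_adj (S.adj_one i) (adj_inv_smul_compl ht i) ?_
  rw [compl_eq]
  simpa using S.smul_ne_compl 1 (t i)⁻¹ i i

lemma pow_crossing (S : CutSystem E) (ht : ∀ i, sep E 1 (t i) = {E i}) (i : ι) {x : F}
    (h1 : x ∉ E i) (h2 : x ∉ (t i)⁻¹ • (E i)ᶜ) (m : ℕ) :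
    t i ^ (m + 1) * x ∈ E i ∧ (t i ^ (m + 1))⁻¹ * x ∈ (t i)⁻¹ • (E i)ᶜ := by
  have hd := Set.disjoint_left.1 (S.disjoint_crossing ht i)
  have k1 : ∀ y, y ∉ (t i)⁻¹ • (E i)ᶜ → t i * y ∈ E i := by
    intro y hy
    by_contra h
    exact hy (Set.mem_smul_set_iff_inv_smul_mem.2 (by simpa using h))
  have k2 : ∀ y, y ∉ E i → (t i)⁻¹ * y ∈ (t i)⁻¹ • (E i)ᶜ := fun y hy =>
    Set.smul_mem_smul_set hy
  induction m with
  | zero => simpa using ⟨k1 x h2, k2 x h1⟩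
  | succ m ih =>
    constructor
    · rw [pow_succ', mul_assoc]
      exact k1 _ (hd ih.1)
    · rw [pow_succ, _root_.mul_inv_rev, mul_assoc]
      exact k2 _ fun h => hd h ih.2

/-- The base group and the cyclic groups generated by the crossing elements. -/
def factor (E : ι → Set F) (t : ι → F) : Option ι → Subgroup F
  | none => ⨅ i, sideStab (E i)
  | some i => Subgroup.zpowers (t i)

lemma lift_factor_injective [Finite ι] [Nontrivial ι] (S : CutSystem E)
    (ht : ∀ i, sep E 1 (t i) = {E i}) :
    Function.Injective (Monoid.CoprodI.lift fun o => (factor E t o).subtype) := by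
  let X : Option ι → Set F := fun o =>
    o.elim {x | ∀ i, x ∉ E i ∪ (t i)⁻¹ • (E i)ᶜ} fun i => E i ∪ (t i)⁻¹ • (E i)ᶜ
  have hX : Pairwise (Function.onFun Disjoint X) := by
    rintro (_ | i) (_ | j) hij
    · exact absurd rfl hij
    · exact Set.disjoint_left.2 fun x hx => hx j
    · exact Set.disjoint_right.2 fun x hx => hx i
    · have := S.disjoint_smul_union ht (one_mem _)
        (Or.inr fun h => hij (congrArg some h) : (1 : F) ≠ 1 ∨ i ≠ j)
      rwa [one_smul] at this
  refine Monoid.CoprodI.lift_injective_of_ping_pong _ (Or.inl ?_) X ?_ hX ?_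
  · have := Fintype.ofFinite ι
    have h2 := Fintype.one_lt_card (α := ι)
    rw [Cardinal.mk_option, Cardinal.mk_fintype]
    exact_mod_cast (by omega : 3 ≤ Fintype.card ι + 1)
  · rintro (_ | i)
    · refine ⟨1, fun i hi => hi.elim (S.adj_one i).2.1 (adj_inv_smul_compl ht i).2.1⟩
    · exact ⟨t i, Or.inl (by rw [ht]; rfl : E i ∈ sep E 1 (t i)).2.2⟩
  · rintro (_ | i) o hio ⟨h, hh⟩ h1
    · obtain ⟨j, rfl⟩ := Option.ne_none_iff_exists'.1 hio.symm
      intro x hx i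
      exact Set.disjoint_left.1 (S.disjoint_smul_union ht hh
        (Or.inl fun h => h1 (Subtype.ext h) : h ≠ 1 ∨ j ≠ i)) hx
    · have hdisj := Set.disjoint_right.1 (hX hio)
      rintro _ ⟨x, hx, rfl⟩
      have hx' := hdisj hx
      obtain ⟨k, rfl⟩ := hh
      have hk : k ≠ 0 := by
        rintro rfl
        exact h1 (Subtype.ext (zpow_zero _))
      have hp := S.pow_crossing ht i (fun h => hx' (Or.inl h)) (fun h => hx' (Or.inr h))
        (k.natAbs - 1)
      rw [Nat.sub_add_cancel (Int.natAbs_pos.2 hk)] at hp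
      rcases le_total 0 k with h | h
      · lift k to ℕ using h
        exact Or.inl (by simpa using hp.1)
      · obtain ⟨m, rfl⟩ := Int.exists_eq_neg_ofNat h
        exact Or.inr (by simpa using hp.2)

/-- An element of infinite order is a basis of the cyclic group it generates. -/
noncomputable def zpowersBasis (g : F) (hg : ¬ IsOfFinOrder g) :
    FreeGroupBasis Unit (Subgroup.zpowers g) :=
  .ofRepr (MulEquiv.ofBijective
    (FreeGroup.lift fun _ : Unit => (⟨g, Subgroup.mem_zpowers g⟩ : Subgroup.zpowers g)) (by
      have hof : ∀ k : ℤ, FreeGroup.lift (fun _ : Unit =>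
          (⟨g, Subgroup.mem_zpowers g⟩ : Subgroup.zpowers g)) (FreeGroup.of () ^ k) =
          ⟨g ^ k, k, rfl⟩ := by
        intro k
        rw [_root_.map_zpow, FreeGroup.lift_apply_of]
        rfl
      constructor
      · refine (injective_iff_map_eq_one _).2
          (FreeGroup.freeGroupUnitEquivInt.forall_congr_left.2 fun k hk => ?_)
        have := (hof k).symm.trans hk
        have h2 : g ^ k = g ^ (0 : ℤ) := by simpa using congrArg Subtype.val this
        rw [injective_zpow_iff_not_isOfFinOrder.2 hg h2]
        exact zpow_zero _
      · rintro ⟨_, k, rfl⟩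
        exact ⟨_, hof k⟩)).symm

lemma zpowersBasis_apply (g : F) (hg : ¬ IsOfFinOrder g) (u : Unit) :
    (zpowersBasis g hg u : F) = g := by
  change ((FreeGroup.lift fun _ : Unit => (⟨g, Subgroup.mem_zpowers g⟩ : Subgroup.zpowers g))
    (FreeGroup.of u) : F) = g
  rw [FreeGroup.lift_apply_of]

/-- A free group with a system of cuts has a basis consisting of elements crossing the cuts
adjacent to the base point and a basis of the base group. -/
theorem exists_basis [IsFreeGroup F] [IsMulTorsionFree F] [Finite ι] [Nontrivial ι]
    (S : CutSystem E) (ht : ∀ i, sep E 1 (t i) = {E i}) :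
    ∃ (T : Type) (b : FreeGroupBasis (T ⊕ ι) F), (∀ i, b (Sum.inr i) = t i) ∧
      Subgroup.closure (Set.range fun s : T => b (Sum.inl s)) = ⨅ i, sideStab (E i) := by
  have htor : ∀ i, ¬ IsOfFinOrder (t i) := by
    intro i
    refine not_isOfFinOrder_of_isMulTorsionFree fun h => ?_
    have : E i ∈ sep E 1 (t i) := by rw [ht]; rfl
    rw [h] at this
    exact this.2.1 this.2.2
  have hsurj : Function.Surjective (Monoid.CoprodI.lift fun o => (factor E t o).subtype) := by
    intro g
    have hg := S.mem_closure_of_mem_sideStab ht Set.univ (g := g) (by simp)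
    rw [← MonoidHom.mem_range]
    refine (sup_le ?_ ?_ : _ ≤ (Monoid.CoprodI.lift fun o => (factor E t o).subtype).range) hg
    · intro h hh
      exact ⟨Monoid.CoprodI.of (i := none) ⟨h, hh⟩, by simp⟩
    · rw [Subgroup.closure_le]
      rintro _ ⟨i, -, rfl⟩
      exact ⟨Monoid.CoprodI.of (i := some i) ⟨t i, Subgroup.mem_zpowers _⟩, by simp⟩
  let e := MulEquiv.ofBijective _ ⟨S.lift_factor_injective ht, hsurj⟩
  let bH : FreeGroupBasis _ (factor E t none) := IsFreeGroup.basis _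
  let T := IsFreeGroup.Generators (factor E t none)
  let X : Option ι → Type := fun o => o.elim T fun _ => Unit
  let B : ∀ o, FreeGroupBasis (X o) (factor E t o) := fun o => match o with
    | none => bH
    | some i => zpowersBasis (t i) (htor i)
  let r : (Σ o, X o) ≃ T ⊕ ι :=
    { toFun := fun p => match p with
        | ⟨none, s⟩ => Sum.inl s
        | ⟨some i, _⟩ => Sum.inr i
      invFun := Sum.elim (fun s => ⟨none, s⟩) fun i => ⟨some i, ()⟩
      left_inv := by rintro ⟨_ | i, s⟩ <;> rfl
      right_inv := by rintro (s | i) <;> rfl }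
  have hB : ∀ p : Σ o, X o, (Monoid.CoprodI.FreeGroupBasis.coprodI B).map e p = (B p.1 p.2 : F) := by
    intro p
    have : Monoid.CoprodI.FreeGroupBasis.coprodI B p =
        Monoid.CoprodI.of (M := fun o => factor E t o) (B p.1 p.2) := by
      change FreeGroup.lift (fun x : Σ o, X o =>
        Monoid.CoprodI.of (M := fun o => factor E t o) (B x.1 x.2)) (FreeGroup.of p) = _
      rw [FreeGroup.lift_apply_of]
    rw [FreeGroupBasis.map_apply, this]
    exact Monoid.CoprodI.lift_of (fun o => (factor E t o).subtype) (B p.1 p.2)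
  refine ⟨T, ((Monoid.CoprodI.FreeGroupBasis.coprodI B).map e).reindex r, fun i => ?_, ?_⟩
  · rw [FreeGroupBasis.reindex_apply, hB]
    exact zpowersBasis_apply _ _ _
  · have h1 : (Set.range fun s : T =>
        ((Monoid.CoprodI.FreeGroupBasis.coprodI B).map e).reindex r (Sum.inl s)) =
        (factor E t none).subtype '' Set.range bH := by
      rw [← Set.range_comp]
      congr 1
    have h2 : Subgroup.closure (Set.range bH) = ⊤ := by
      rw [eq_top_iff]
      intro h _
      have : (Subgroup.closure (Set.range bH)).subtype.comp
          (bH.lift fun s => ⟨bH s, Subgroup.subset_closure ⟨s, rfl⟩⟩) = MonoidHom.id _ :=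
        bH.ext_hom _ _ fun s => by simp
      have h3 := DFunLike.congr_fun this h
      rw [MonoidHom.id_apply] at h3
      rw [← h3]
      exact Subtype.prop _
    rw [h1, ← MonoidHom.map_closure, h2, ← MonoidHom.range_eq_map, Subgroup.range_subtype]
    rfl

end CutSystem

end FreeBasis

section OddOrder

open scoped Pointwise

variable {F : Type} [Group F]

lemma mulAut_image_smul (e : MulAut F) (w : F) (C : Set F) : e '' (w • C) = e w • (e '' C) := by
  ext x
  simp only [← Set.image_smul, Set.mem_image, smul_eq_mul]
  constructor
  · rintro ⟨_, ⟨y, hy, rfl⟩, rfl⟩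
    exact ⟨_, ⟨y, hy, rfl⟩, (_root_.map_mul e w y).symm⟩
  · rintro ⟨_, ⟨y, hy, rfl⟩, rfl⟩
    exact ⟨_, ⟨y, hy, rfl⟩, _root_.map_mul e w y⟩

lemma mulAut_image_image (e e' : MulAut F) (C : Set F) : e '' (e' '' C) = ⇑(e * e') '' C := by
  rw [← Set.image_comp]
  rfl

lemma mulAut_image_compl (e : MulAut F) (C : Set F) : e '' Cᶜ = (e '' C)ᶜ :=
  Set.image_compl_eq e.bijective

lemma mem_mulAut_image {e : MulAut F} {C : Set F} {x : F} : e x ∈ e '' C ↔ x ∈ C :=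
  e.injective.mem_set_image

lemma eq_zero_of_alternating {f : MulAut F} (hodd : Odd (orderOf f)) {χ : F → ℤ}
    (h : ∀ g, χ (f g) = - χ g) (g : F) : χ g = 0 := by
  have key : ∀ m : ℕ, χ ((f ^ m) g) = (-1) ^ m * χ g := by
    intro m
    induction m with
    | zero => simp
    | succ m ih => rw [pow_succ', MulAut.mul_apply, h, ih, pow_succ]; ring
  have := key (orderOf f)
  rw [pow_orderOf_eq_one, MulAut.one_apply, hodd.neg_one_pow] at this
  linarith

/-- The images of `A` under the powers of an automorphism. -/
def orbitFamily (f : MulAut F) (A : Set F) : Subgroup.zpowers f → Set F := fun e => e.1 '' A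

lemma IsCut.image {f e : MulAut F} {A C : Set F} (he : e ∈ Subgroup.zpowers f)
    (h : IsCut (orbitFamily f A) C) : IsCut (orbitFamily f A) (e '' C) := by
  obtain ⟨w, i, rfl | rfl⟩ := h
  · refine ⟨e w, ⟨e, he⟩ * i, Or.inl ?_⟩
    rw [mulAut_image_smul, orbitFamily, mulAut_image_image]
    rfl
  · refine ⟨e w, ⟨e, he⟩ * i, Or.inr ?_⟩
    rw [mulAut_image_compl, mulAut_image_smul, orbitFamily, mulAut_image_image]
    rfl

lemma Adj.image {f e : MulAut F} {A C : Set F} (he : e ∈ Subgroup.zpowers f)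
    (h : Adj (orbitFamily f A) C 1) : Adj (orbitFamily f A) (e '' C) 1 := by
  refine ⟨h.1.image he, ?_, fun D hD h1 hCD => ?_⟩
  · rw [← _root_.map_one e, mem_mulAut_image]
    exact h.2.1
  · have hD' : e '' ((e⁻¹ : MulAut F) '' D) = D := by
      rw [mulAut_image_image, mul_inv_cancel]
      exact Set.image_id D
    have := h.2.2 ((e⁻¹ : MulAut F) '' D) (hD.image (inv_mem he))
      (by rwa [← mem_mulAut_image (e := e), hD', _root_.map_one])
      (by rwa [← Set.image_subset_image_iff e.injective, hD'])
    rw [← this, hD']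

/-- An automorphism of odd order which moves the flux of an almost invariant set has a system of
two cuts in which it maps the first cut to the second one. -/
theorem exists_cutSystem [IsMulTorsionFree F] {X : Set F} (hX : X.Finite)
    (hgen : Subgroup.closure X = ⊤) {f : MulAut F} (hodd : Odd (orderOf f)) {B : Set F}
    (hB : AlmostInv B) (hne : ∃ g, flux B (f g) ≠ flux B g) :
    ∃ A : Set F, AlmostInv A ∧ (∃ g, flux A (f g) ≠ flux A g) ∧
      CutSystem ![A, f '' A] := by
  have hfin : IsOfFinOrder f := orderOf_pos_iff.1 hodd.pos
  obtain ⟨A, hA, ⟨g, hg⟩, hnest⟩ := exists_nested_almostInv hX hgen hfin hB hne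
  have : Finite (Subgroup.zpowers f) := hfin.finite_zpowers
  have hE : ∀ e, AlmostInv (orbitFamily f A e) := fun e => hA.image e.1
  obtain ⟨C, hC⟩ : ∃ C, Adj (orbitFamily f A) C 1 := by
    obtain ⟨g, hg⟩ : ∃ g, flux A g ≠ 0 := by
      by_contra! h
      exact hg (by rw [h, h])
    have hgA : g ∉ sideStab A := fun h => hg (flux_eq_zero_of_mem_sideStab h)
    have : (sep (orbitFamily f A) 1 g).Nonempty := by
      rw [Set.nonempty_iff_ne_empty, ne_eq, sep_one_eq_empty]
      intro h
      have := Subgroup.mem_iInf.1 h 1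
      rw [show orbitFamily f A 1 = A from Set.image_id A] at this
      exact hgA this
    obtain ⟨C, -, hC⟩ := exists_adj hE this
    exact ⟨C, hC⟩
  have hcut : ∀ {D}, IsCut (orbitFamily f A) D → AlmostInv D := by
    rintro D ⟨w, e, rfl | rfl⟩
    · exact (hE e).smul w
    · exact ((hE e).smul w).compl
  have hnested : ∀ {D D'}, IsCut (orbitFamily f A) D → IsCut (orbitFamily f A) D' →
      Nested D D' := by
    have key : ∀ (v w : F) (i j : Subgroup.zpowers f),
        Nested (v • orbitFamily f A i) (w • orbitFamily f A j) := by
      intro v w i j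
      have h1 := (hnest (i.1⁻¹ (v⁻¹ * w)) (i⁻¹ * j).1 (i⁻¹ * j).2).image i.1.toEquiv
      have h2 := h1.image (Equiv.mulLeft v)
      have h3 : w • orbitFamily f A j =
          v • (i.1 '' (i.1⁻¹ (v⁻¹ * w) • ((i⁻¹ * j).1 '' A))) := by
        rw [mulAut_image_smul, mulAut_image_image, smul_smul]
        simp [orbitFamily]
      rw [h3]
      exact h2
    rintro D D' ⟨v, i, rfl | rfl⟩ ⟨w, j, rfl | rfl⟩ <;>
      simp only [nested_compl_left, nested_compl_right, key]
  have hgC : ∃ g, flux C (f g) ≠ flux C g := by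
    obtain ⟨w, ⟨e, he⟩, h⟩ := hC.1
    have hcomm : e * f = f * e := by
      obtain ⟨k, rfl⟩ := he
      exact (Commute.refl f).zpow_left k
    have h1 : flux A (e⁻¹ (f (e g))) ≠ flux A (e⁻¹ (e g)) := by
      rw [show f (e g) = e (f g) from (DFunLike.congr_fun hcomm g).symm]
      simpa using hg
    refine ⟨e g, ?_⟩
    rcases h with rfl | rfl
    · rw [flux_smul, flux_smul, orbitFamily, flux_image, flux_image]
      exact h1
    · rw [flux_compl, flux_compl, flux_smul, flux_smul, orbitFamily, flux_image, flux_image]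
      exact fun h => h1 (neg_injective h)
  have hadj : ∀ i : Fin 2, Adj (orbitFamily f A) (![C, f '' C] i) 1 :=
    Fin.forall_fin_two.2 ⟨hC, hC.image (Subgroup.mem_zpowers f)⟩
  have hcut2 : ∀ {D}, IsCut ![C, f '' C] D → IsCut (orbitFamily f A) D := by
    rintro D ⟨w, i, rfl | rfl⟩
    · exact (hadj i).1.smul w
    · exact ((hadj i).1.smul w).compl
  have hflux : ∀ i j : Fin 2, (∀ g, flux (![C, f '' C] i) g = flux (![C, f '' C] j) g) → i = j := by
    obtain ⟨g, hg⟩ := hgC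
    refine Fin.forall_fin_two.2 ⟨Fin.forall_fin_two.2 ⟨fun _ => rfl, fun h => absurd (h (f g)) ?_⟩,
      Fin.forall_fin_two.2 ⟨fun h => absurd (h (f g)) ?_, fun _ => rfl⟩⟩
    · simpa [flux_image] using hg
    · simpa [flux_image] using hg.symm
  have hfluxC : ∃ g, flux C g ≠ 0 := by
    by_contra! h
    obtain ⟨g, hg⟩ := hgC
    exact hg (by rw [h, h])
  have hne0 : ∀ i : Fin 2, ∃ g, flux (![C, f '' C] i) g ≠ 0 := by
    obtain ⟨g, hg⟩ := hfluxC
    exact Fin.forall_fin_two.2 ⟨⟨g, hg⟩, ⟨f g, by simpa [flux_image] using hg⟩⟩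
  have hneg : ∀ i j : Fin 2, ¬ ∀ g, flux (![C, f '' C] i) g = - flux (![C, f '' C] j) g := by
    have key : ¬ ∀ g, flux C (f g) = - flux C g := fun h => by
      obtain ⟨g, hg⟩ := hfluxC
      exact hg (eq_zero_of_alternating hodd h g)
    intro i j h
    by_cases hij : i = j
    · subst hij
      obtain ⟨g, hg⟩ := hne0 i
      exact hg (by have := h g; linarith)
    · refine key fun g => ?_
      have h' := h (f g)
      fin_cases i <;> fin_cases j <;> simp [flux_image] at h' hij ⊢
      · exact h'
      · rw [h', neg_neg]
  refine ⟨C, hcut hC.1, hgC, fun i => hcut (hadj i).1,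
    fun i j w => hnested (hadj i).1 ((hadj j).1.smul w),
    fun i => ⟨⟨1, i, Or.inl (one_smul _ _).symm⟩, (hadj i).2.1,
      fun D hD => (hadj i).2.2 D (hcut2 hD)⟩, ?_, ?_⟩
  · intro v w i j h
    obtain rfl := hflux i j fun g => by
      rw [← flux_smul _ v g, h, flux_smul]
    obtain ⟨g, hg⟩ := hne0 i
    have := (hcut (hadj i).1).smul_eq_self hg (w := w⁻¹ * v) (by rw [mul_smul, h, inv_smul_smul])
    exact ⟨(inv_mul_eq_one.1 this).symm, rfl⟩
  · intro v w i j h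
    refine hneg i j fun g => ?_
    rw [← flux_smul _ v g, h, flux_compl, flux_smul]

lemma mem_smul_iff_of_sep {ι : Type} {E : ι → Set F} (S : CutSystem E) {t : F} {i : ι}
    (ht : sep E 1 t = {E i}) (w : F) : t ∈ w • E i ↔ (1 : F) ∈ w • E i ∨ w = 1 := by
  have hmem : ∀ C, C ∈ sep E 1 t ↔ C = E i := fun C => by rw [ht]; rfl
  constructor
  · intro h
    by_contra! h'
    have := (hmem (w • E i)).1 ⟨isCut_smul_self w i, h'.1, h⟩
    exact h'.2 (S.smul_inj (this.trans (one_smul F _).symm)).1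
  · rintro (h | rfl)
    · by_contra h'
      have := (hmem (w • E i)ᶜ).1 ⟨(isCut_smul_self w i).compl, fun h1 => h1 h, h'⟩
      exact S.smul_ne_compl 1 w i i ((one_smul F _).trans this.symm)
    · rw [one_smul]
      exact ((hmem _).2 rfl).2.2

lemma map_mem_sideStab_image {f : MulAut F} {A : Set F} {g : F} :
    f g ∈ sideStab (f '' A) ↔ g ∈ sideStab A := by
  have key : ∀ w x, f x ∈ f w • (f '' A) ↔ x ∈ w • A := fun w x => by
    rw [← mulAut_image_smul, mem_mulAut_image]
  have key1 : ∀ w, 1 ∈ f w • (f '' A) ↔ 1 ∈ w • A := fun w => by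
    rw [← key w 1, _root_.map_one]
  rw [mem_sideStab, mem_sideStab]
  constructor
  · intro h w
    rw [← key, ← key1]
    exact h (f w)
  · intro h w
    obtain ⟨v, rfl⟩ := f.surjective w
    rw [key, key1]
    exact h v

/-- An automorphism of odd order of a free group of rank at least `3` which moves the flux of an
almost invariant set is, up to a change of basis, close to exchanging two basis elements. -/
theorem exists_conj_of_odd {n : ℕ} (hn : 3 ≤ n) {f : FrAut n} (hodd : Odd (orderOf f))
    {B : Set (FreeGroup (Fin n))} (hB : AlmostInv B) (hne : ∃ g, flux B (f g) ≠ flux B g) :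
    ∃ (θ : FrAut n) (a b c : Fin n), a ≠ b ∧ c ≠ a ∧ c ≠ b ∧
      (∀ j ≠ b, (θ⁻¹ * f * θ)⁻¹ (FreeGroup.of j) ∈ Subgroup.closure (FreeGroup.of '' {a}ᶜ)) ∧
      ∃ g ∈ Subgroup.closure (FreeGroup.of '' {b}ᶜ),
        (θ⁻¹ * f * θ) (FreeGroup.of a) = FreeGroup.of b * g := by
  have hgen : Subgroup.closure (Set.range (FreeGroup.of : Fin n → _)) = ⊤ :=
    FreeGroup.closure_range_of _
  obtain ⟨A, hA, ⟨g, hg⟩, S⟩ := exists_cutSystem (Set.finite_range _) hgen hodd hB hne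
  have hflux : ∀ Z : Finset (Fin 2), Z.Nonempty →
      ∃ g, ∑ k ∈ Z, flux (![A, f '' A] k) g ≠ 0 := by
    have hne0 : ∃ g, flux A g ≠ 0 := by
      by_contra! h
      exact hg (by rw [h, h])
    intro Z hZ
    by_contra! hsum
    have h : ∀ x, ∑ k, (if k ∈ Z then flux (![A, f '' A] k) x else 0) = 0 := fun x => by
      rw [Finset.sum_ite_mem, Finset.univ_inter, hsum]
    have h' := fun x => h (f x)
    simp only [Fin.sum_univ_two] at h h'
    obtain ⟨x, hx⟩ := hne0
    by_cases h0 : (0 : Fin 2) ∈ Z <;> by_cases h1 : (1 : Fin 2) ∈ Z <;>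
      simp only [h0, h1, if_true, if_false, Matrix.cons_val_zero, Matrix.cons_val_one, flux_image,
        MulAut.inv_apply_self, add_zero, zero_add] at h h'
    · exact hx (eq_zero_of_alternating hodd (χ := flux A) (fun x => by linarith [h' x]) x)
    · exact hx (h x)
    · exact hx (h' x)
    · obtain ⟨k, hk⟩ := hZ
      fin_cases k
      exacts [h0 hk, h1 hk]
  choose t ht using S.exists_crossing hflux
  obtain ⟨T, b, hbt, hbH⟩ := S.exists_basis ht
  set H := ⨅ i, sideStab (![A, f '' A] i) with hH
  have h01 : t 0 ∈ sideStab (f '' A) :=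
    S.mem_sideStab_of_sep (k := 1) (i := 0) (x := 1) (by simp) (Or.inl (by rw [one_smul]; exact ht 0))
  have hH1 : H ≤ sideStab (f '' A) := iInf_le (fun i => sideStab (![A, f '' A] i)) 1
  have hside0 : sideStab A ≤ H ⊔ Subgroup.closure {t 1} := fun g hg => by
    simpa using S.mem_closure_of_mem_sideStab ht {1} (g := g)
      (Fin.forall_fin_two.2 ⟨fun _ => hg, fun h => absurd rfl h⟩)
  have hside1 : sideStab (f '' A) ≤ H ⊔ Subgroup.closure {t 0} := fun g hg => by
    simpa using S.mem_closure_of_mem_sideStab ht {0} (g := g)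
      (Fin.forall_fin_two.2 ⟨fun h => absurd rfl h, fun _ => hg⟩)
  have hft : (t 1)⁻¹ * f (t 0) ∈ sideStab (f '' A) := by
    intro w
    have h1 : t 1 ∈ (t 1 * w) • (f '' A) ↔ 1 ∈ (t 1 * w) • (f '' A) ∨ t 1 * w = 1 :=
      mem_smul_iff_of_sep S (ht 1) (t 1 * w)
    obtain ⟨v, hv⟩ := f.surjective (t 1 * w)
    have h0 : t 0 ∈ v • A ↔ 1 ∈ v • A ∨ v = 1 := mem_smul_iff_of_sep S (ht 0) v
    rw [← mem_mulAut_image (e := f), ← mem_mulAut_image (e := f) (x := 1), mulAut_image_smul, hv,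
      _root_.map_one, ← map_eq_one_iff f f.injective, hv, ← h1] at h0
    simpa [Set.mem_smul_set_iff_inv_smul_mem, mul_assoc] using h0
  let r : T ⊕ Fin 2 ≃ Fin n := Equiv.ofFreeGroupEquiv b.repr.symm
  let θ : FrAut n := (b.reindex r).repr.symm
  have hθ : ∀ s, θ (FreeGroup.of (r s)) = b s := fun s => by
    have : b.reindex r (r s) = b s := by simp
    exact this
  obtain ⟨c⟩ : Nonempty T := by
    by_contra hT
    have := not_nonempty_iff.1 hT
    have hc := Nat.card_congr r
    have : Finite T := inferInstance
    rw [Nat.card_sum] at hc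
    simp at hc
    omega
  have hcl : ∀ i : Fin 2, ∀ g ∈ H ⊔ Subgroup.closure {t i}, ∀ j : Fin 2, j ≠ i →
      θ⁻¹ g ∈ Subgroup.closure (FreeGroup.of '' {r (Sum.inr j)}ᶜ) := by
    intro i g hg j hij
    have hle : H ⊔ Subgroup.closure {t i} ≤
        (Subgroup.closure (FreeGroup.of '' {r (Sum.inr j)}ᶜ)).comap (θ⁻¹ : FrAut n).toMonoidHom := by
      have hmem : ∀ s, s ≠ Sum.inr j →
          θ⁻¹ (b s) ∈ Subgroup.closure (FreeGroup.of '' {r (Sum.inr j)}ᶜ) := fun s hs => by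
        rw [← hθ, MulAut.inv_apply_self]
        exact Subgroup.subset_closure ⟨_, fun h => hs (r.injective h), rfl⟩
      rw [← hbH, sup_le_iff, Subgroup.closure_le, Subgroup.closure_le]
      constructor
      · rintro _ ⟨s, rfl⟩
        exact hmem _ (by simp)
      · rintro _ rfl
        rw [← hbt]
        exact hmem _ (by simpa using hij.symm)
    exact hle hg
  refine ⟨θ, r (Sum.inr 0), r (Sum.inr 1), r (Sum.inl c), by simp, by simp, by simp, ?_, ?_⟩
  · intro j hj
    obtain ⟨s, rfl⟩ := r.surjective j
    have hs : b s ∈ sideStab (f '' A) := by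
      rcases s with s | i
      · exact hH1 (hbH ▸ Subgroup.subset_closure ⟨s, rfl⟩)
      · fin_cases i
        · rw [hbt]; exact h01
        · exact absurd rfl hj
    have h2 : f⁻¹ (b s) ∈ sideStab A := by
      rw [← map_mem_sideStab_image (f := f), MulAut.apply_inv_self]
      exact hs
    have := hcl 1 _ (hside0 h2) 0 (by simp)
    rw [← hθ] at this
    simpa [mul_assoc] using this
  · refine ⟨_, hcl 0 _ (hside1 hft) 1 (by simp), ?_⟩
    have h1 : θ⁻¹ (t 1) = FreeGroup.of (r (Sum.inr 1)) := by
      rw [← hbt, ← hθ, MulAut.inv_apply_self]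
    rw [_root_.map_mul, _root_.map_inv, h1, mul_inv_cancel_left, ← hbt, ← hθ]
    rfl

end OddOrder

section FreeCut

variable {n : ℕ}

lemma mul_of_mem_startsWith_iff (i j : Fin n) {a : FreeGroup (Fin n)} (h : ¬ (a = 1 ∧ i = j)) :
    a * FreeGroup.of j ∈ FreeGroup.startsWith (i, true) ↔ a ∈ FreeGroup.startsWith (i, true) := by
  have hred := FreeGroup.isReduced_toWord (x := a)
  simp only [FreeGroup.startsWith, Set.mem_ofPred_eq, FreeGroup.toWord_mul, FreeGroup.toWord_of]
  have hnil := FreeGroup.toWord_eq_nil_iff (x := a)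
  rcases List.eq_nil_or_concat' a.toWord with h0 | ⟨L, ⟨k, b⟩, hL⟩
  · have : i ≠ j := fun hij => h ⟨hnil.1 h0, hij⟩
    simp [h0, this.symm]
  rw [hL] at hred ⊢
  have hLred : FreeGroup.IsReduced L := List.IsChain.left_of_append hred
  by_cases hkb : k = j ∧ b = false
  · obtain ⟨rfl, rfl⟩ := hkb
    have : FreeGroup.reduce (L ++ [(k, false)] ++ [(k, true)]) = L := by
      rw [← hLred.reduce_eq]
      refine FreeGroup.reduce.Step.eq ?_
      have := FreeGroup.Red.Step.not (L₁ := L) (L₂ := []) (x := k) (b := false)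
      simpa [hLred.reduce_eq] using this
    rw [this]
    rcases L with _ | ⟨l, L⟩ <;> simp
  · have hr : FreeGroup.IsReduced (L ++ [(k, b)] ++ [(j, true)]) := by
      refine List.isChain_append.2 ⟨hred, by simp, ?_⟩
      simp
      intro hk
      cases b
      · exact absurd ⟨hk, rfl⟩ hkb
      · rfl
    rw [hr.reduce_eq]
    rcases L with _ | ⟨l, L⟩ <;> simp

lemma shiftDiff_startsWith (i j : Fin n) :
    shiftDiff (FreeGroup.startsWith (i, true)) (FreeGroup.of j) =
      Pi.single 1 (if i = j then 1 else 0) := by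
  classical
  funext a
  by_cases h : a = 1 ∧ i = j
  · obtain ⟨rfl, rfl⟩ := h
    simp [shiftDiff, FreeGroup.startsWith]
  · have h1 := mul_of_mem_startsWith_iff i j h
    have h2 : shiftDiff (FreeGroup.startsWith (i, true)) (FreeGroup.of j) a = 0 := by
      simp [shiftDiff, Set.indicator_apply, h1]
    rw [h2]
    by_cases ha : a = 1
    · subst ha
      have : i ≠ j := by tauto
      simp [this]
    · simp [ha]

lemma almostInv_startsWith (i : Fin n) : AlmostInv (FreeGroup.startsWith (i, true)) := by
  refine almostInv_of_closure (FreeGroup.closure_range_of (Fin n)) ?_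
  rintro _ ⟨j, rfl⟩
  rw [shiftDiff_startsWith]
  exact (Set.finite_singleton 1).subset Pi.support_single_subset

lemma flux_startsWith (i : Fin n) (g : FreeGroup (Fin n)) :
    flux (FreeGroup.startsWith (i, true)) g = (expSum i g).toAdd := by
  let φ : FreeGroup (Fin n) →* Multiplicative ℤ :=
    { toFun := fun g => Multiplicative.ofAdd (flux (FreeGroup.startsWith (i, true)) g)
      map_one' := by rw [flux_one]; rfl
      map_mul' := fun g h => by rw [flux_mul (almostInv_startsWith i)]; rfl }
  have : φ = expSum i := by
    refine FreeGroup.ext_hom _ _ fun j => ?_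
    change Multiplicative.ofAdd (flux _ _) = _
    rw [flux, shiftDiff_startsWith, finsum_eq_single _ 1 (by simp +contextual)]
    simp [expSum, eq_comm]
  exact congrArg Multiplicative.toAdd (DFunLike.congr_fun this g)

end FreeCut

section PolynomialFunctions

variable {Γ : Type*} [Group Γ]

/-- The difference operator `u ↦ (x ↦ u (g * x) - u x)` on integer functions on a group. -/
def diffOp (g : Γ) : (Γ → ℤ) →ₗ[ℤ] (Γ → ℤ) where
  toFun u x := u (g * x) - u x
  map_add' u v := by funext x; simp; ring
  map_smul' c u := by funext x; simp; ring

@[simp] lemma diffOp_apply (g : Γ) (u : Γ → ℤ) (x : Γ) : diffOp g u x = u (g * x) - u x := rfl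

/-- The polynomial functions of degree less than `k` on a group. -/
def polyFun (Γ : Type*) [Group Γ] : ℕ → Submodule ℤ (Γ → ℤ)
  | 0 => ⊥
  | k + 1 => ⨅ g : Γ, (polyFun Γ k).comap (diffOp g)

lemma mem_polyFun_succ {k : ℕ} {u : Γ → ℤ} :
    u ∈ polyFun Γ (k + 1) ↔ ∀ g, diffOp g u ∈ polyFun Γ k := by
  simp [polyFun]

lemma polyFun_le_succ (k : ℕ) : polyFun Γ k ≤ polyFun Γ (k + 1) := by
  induction k with
  | zero => exact bot_le
  | succ k ih =>
    intro u hu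
    rw [mem_polyFun_succ] at hu ⊢
    exact fun g => ih (hu g)

lemma translate_mem_polyFun {k : ℕ} {u : Γ → ℤ} (hu : u ∈ polyFun Γ k) (b : Γ) :
    (fun x => u (b * x)) ∈ polyFun Γ k := by
  have h := mem_polyFun_succ.1 (polyFun_le_succ k hu) b
  convert (polyFun Γ k).add_mem hu h using 1
  funext x
  simp

lemma mem_polyFun_of_closure {S : Set Γ} (hS : Subgroup.closure S = ⊤) {k : ℕ} {u : Γ → ℤ}
    (h : ∀ g ∈ S, diffOp g u ∈ polyFun Γ k) : u ∈ polyFun Γ (k + 1) := by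
  refine mem_polyFun_succ.2 fun g => ?_
  have hg : g ∈ Subgroup.closure S := hS ▸ Subgroup.mem_top g
  induction hg using Subgroup.closure_induction with
  | mem x hx => exact h x hx
  | one =>
    convert (polyFun Γ k).zero_mem
    funext x
    simp
  | mul a b _ _ ha hb =>
    convert (polyFun Γ k).add_mem (translate_mem_polyFun ha b) hb using 1
    funext x
    simp [mul_assoc]
  | inv a _ ha =>
    convert (polyFun Γ k).neg_mem (translate_mem_polyFun ha a⁻¹) using 1
    funext x
    simp

lemma comp_eq_of_mem_polyFun_one {u : Γ → ℤ} (hu : u ∈ polyFun Γ 1) (f : MulAut Γ) :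
    u ∘ f = u := by
  rw [mem_polyFun_succ] at hu
  have h : ∀ g, u g = u 1 := fun g => by
    have := congrFun (show diffOp g u = 0 from hu g) 1
    simpa [sub_eq_zero] using this
  funext x
  simp [h (f x), h x]

end PolynomialFunctions

section TorsionFree

variable {n : ℕ}

lemma hom_eq_prod_expSum {A : Type*} [CommGroup A] (ψ : FreeGroup (Fin n) →* A)
    (g : FreeGroup (Fin n)) : ψ g = ∏ i, ψ (FreeGroup.of i) ^ (expSum i g).toAdd := by
  let φ : FreeGroup (Fin n) →* A :=
    { toFun := fun g => ∏ i, ψ (FreeGroup.of i) ^ (expSum i g).toAdd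
      map_one' := by simp
      map_mul' := fun g h => by simp [_root_.zpow_add, Finset.prod_mul_distrib] }
  have : ψ = φ := by
    refine FreeGroup.ext_hom _ _ fun j => ?_
    simp [φ, expSum, pow_ite]
  exact DFunLike.congr_fun this g

lemma diffOp_sub_mem_polyFun {f : FrAut n} (hf : ∀ i g, expSum i (f g) = expSum i g) {k : ℕ}
    {u : FreeGroup (Fin n) → ℤ} (hu : u ∈ polyFun _ (k + 2)) (g : FreeGroup (Fin n)) :
    diffOp (f g) u - diffOp g u ∈ polyFun (FreeGroup (Fin n)) k := by
  let Q := polyFun (FreeGroup (Fin n)) k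
  let ψ : FreeGroup (Fin n) →* Multiplicative ((FreeGroup (Fin n) → ℤ) ⧸ Q) :=
    { toFun := fun g => Multiplicative.ofAdd (Q.mkQ (diffOp g u))
      map_one' := by
        rw [show diffOp 1 u = 0 by funext x; simp, _root_.map_zero]
        rfl
      map_mul' := fun a b => by
        rw [← ofAdd_add, ← _root_.map_add]
        refine congrArg Multiplicative.ofAdd ((Submodule.Quotient.eq Q).2 ?_)
        convert mem_polyFun_succ.1 (mem_polyFun_succ.1 hu a) b using 1
        funext x
        simp [mul_assoc]
        ring }
  have h : ψ (f g) = ψ g := by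
    rw [hom_eq_prod_expSum ψ (f g), hom_eq_prod_expSum ψ g]
    simp only [hf]
  exact (Submodule.Quotient.eq Q).1 (congrArg Multiplicative.toAdd h)

lemma comp_eq_of_mem_polyFun {f : FrAut n} (hf : ∀ i g, expSum i (f g) = expSum i g)
    (ht : IsOfFinOrder f) (k : ℕ) :
    ∀ u ∈ polyFun (FreeGroup (Fin n)) k, u ∘ f = u := by
  induction k with
  | zero =>
    intro u hu
    rw [show u = 0 from hu]
    rfl
  | succ k ih =>
    intro u hu
    have hv : u ∘ f - u ∈ polyFun (FreeGroup (Fin n)) k := by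
      cases k with
      | zero =>
        rw [comp_eq_of_mem_polyFun_one hu, sub_self]
        exact Submodule.zero_mem _
      | succ k =>
        refine mem_polyFun_succ.2 fun g => ?_
        convert diffOp_sub_mem_polyFun hf hu g using 1
        funext x
        have := congrFun (ih _ (mem_polyFun_succ.1 hu (f g))) x
        simp at this ⊢
        linarith
    have hfix := ih _ hv
    have hpow : ∀ j : ℕ, ∀ x, u ((f ^ j) x) = u x + j * (u (f x) - u x) := by
      intro j
      induction j with
      | zero => simp
      | succ j ihj =>
        intro x
        have h1 := congrFun hfix x
        simp only [Function.comp_apply, Pi.sub_apply] at h1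
        rw [pow_succ, MulAut.mul_apply, ihj, h1]
        push_cast
        ring
    obtain ⟨m, hm, h1⟩ := isOfFinOrder_iff_pow_eq_one.1 ht
    funext x
    have := hpow m x
    rw [h1] at this
    simp [hm.ne'] at this
    simp
    linarith

/-- The shear `v ↦ v + N v` of integer sequences, where `N` shifts along the edges
`j → j + 1` with `s j`. -/
def shear (s : ℕ → Prop) [DecidablePred s] (v : ℕ → ℤ) : ℕ → ℤ
  | 0 => v 0
  | j + 1 => v (j + 1) + if s j then v j else 0

/-- The inverse of `shear s`. -/
def shearInv (s : ℕ → Prop) [DecidablePred s] (v : ℕ → ℤ) : ℕ → ℤ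
  | 0 => v 0
  | j + 1 => v (j + 1) - if s j then shearInv s v j else 0

/-- `shear s` as a permutation of the integer sequences. -/
def shearPerm (s : ℕ → Prop) [DecidablePred s] : Equiv.Perm (ℕ → ℤ) where
  toFun := shear s
  invFun := shearInv s
  left_inv v := by
    funext j
    induction j with
    | zero => rfl
    | succ j ih => simp [shearInv, shear, ih]
  right_inv v := by
    funext j
    cases j <;> simp [shear, shearInv]

/-- The action of the free group on integer sequences in which a letter shears along the edges
that carry it and unshears along the edges that carry its inverse. -/
def shearAction (ℓ : ℕ → Option (Fin n × Bool)) : FreeGroup (Fin n) →* Equiv.Perm (ℕ → ℤ) :=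
  FreeGroup.lift fun i =>
    shearPerm (fun j => ℓ j = some (i, true)) * (shearPerm fun j => ℓ j = some (i, false))⁻¹

lemma shearAction_mk_singleton (ℓ : ℕ → Option (Fin n × Bool)) (i : Fin n) (b : Bool) :
    shearAction ℓ (FreeGroup.mk [(i, b)]) =
      shearPerm (fun j => ℓ j = some (i, b)) * (shearPerm fun j => ℓ j = some (i, !b))⁻¹ := by
  cases b <;> simp [shearAction, _root_.mul_inv_rev]

lemma shearAction_of_mul (ℓ : ℕ → Option (Fin n × Bool)) (i : Fin n) (x : FreeGroup (Fin n))
    (v : ℕ → ℤ) :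
    shearAction ℓ (FreeGroup.of i * x) v =
      shear (fun j => ℓ j = some (i, true))
        (shearInv (fun j => ℓ j = some (i, false)) (shearAction ℓ x v)) := by
  rw [_root_.map_mul, shearAction, FreeGroup.lift_apply_of]
  rfl

lemma shearAction_mem_polyFun (ℓ : ℕ → Option (Fin n × Bool)) (v : ℕ → ℤ) (j : ℕ) :
    (fun x => shearAction ℓ x v j) ∈ polyFun (FreeGroup (Fin n)) (j + 1) ∧
      ∀ i : Fin n, (fun x => shearInv (fun j => ℓ j = some (i, false)) (shearAction ℓ x v) j) ∈
        polyFun (FreeGroup (Fin n)) (j + 1) := by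
  induction j with
  | zero =>
    suffices h : (fun x => shearAction ℓ x v 0) ∈ polyFun (FreeGroup (Fin n)) (0 + 1) from
      ⟨h, fun i => h⟩
    refine mem_polyFun_of_closure (FreeGroup.closure_range_of (Fin n)) ?_
    rintro _ ⟨i, rfl⟩
    convert Submodule.zero_mem _
    funext x
    rw [diffOp_apply, shearAction_of_mul]
    exact sub_self _
  | succ j ih =>
    have h : (fun x => shearAction ℓ x v (j + 1)) ∈ polyFun (FreeGroup (Fin n)) (j + 1 + 1) := by
      refine mem_polyFun_of_closure (FreeGroup.closure_range_of (Fin n)) ?_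
      rintro _ ⟨i, rfl⟩
      convert Submodule.smul_mem _ ((if ℓ j = some (i, true) then 1 else 0) -
        (if ℓ j = some (i, false) then 1 else 0) : ℤ) (ih.2 i) using 1
      funext x
      rw [diffOp_apply, shearAction_of_mul, Pi.smul_apply, smul_eq_mul]
      simp only [shear, shearInv]
      split_ifs <;> ring
    refine ⟨h, fun i => ?_⟩
    convert Submodule.sub_mem _ h (Submodule.smul_mem _
      (if ℓ j = some (i, false) then 1 else 0 : ℤ) (polyFun_le_succ _ (ih.2 i))) using 1
    funext x
    simp only [shearInv, Pi.sub_apply, Pi.smul_apply, smul_eq_mul]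
    split_ifs <;> simp

lemma shearInv_eq_zero_of_lt {s : ℕ → Prop} [DecidablePred s] {v : ℕ → ℤ} {k : ℕ}
    (hv : ∀ j > k, v j = 0) (hs : ¬ s k) : ∀ j > k, shearInv s v j = 0 := by
  intro j hj
  induction j with
  | zero => omega
  | succ j ih =>
    rcases (Nat.lt_succ_iff.1 hj).eq_or_lt with rfl | h
    · simp [shearInv, hv _ hj, hs]
    · simp [shearInv, hv _ hj, ih h]

lemma shearInv_eq_self {s : ℕ → Prop} [DecidablePred s] {v : ℕ → ℤ} {k : ℕ}
    (hs : ∀ j, j + 1 = k → ¬ s j) : shearInv s v k = v k := by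
  cases k with
  | zero => rfl
  | succ k => simp [shearInv, hs k rfl]

lemma shearAction_mk {ℓ : ℕ → Option (Fin n × Bool)}
    (hℓ : ∀ j i b, ℓ j = some (i, b) → ℓ (j + 1) ≠ some (i, !b)) (L : List (Fin n × Bool))
    (hL : ∀ j < L.length, ℓ j = L.reverse[j]?) :
    shearAction ℓ (FreeGroup.mk L) (Pi.single 0 1) L.length = 1 ∧
      ∀ j > L.length, shearAction ℓ (FreeGroup.mk L) (Pi.single 0 1) j = 0 := by
  induction L with
  | nil =>
    rw [← FreeGroup.one_eq_mk, _root_.map_one]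
    refine ⟨rfl, fun j hj => ?_⟩
    have : j ≠ 0 := by simpa using Nat.ne_of_gt hj
    simp [this]
  | cons a L ih =>
    obtain ⟨i, b⟩ := a
    have hlast : ℓ L.length = some (i, b) := by
      rw [hL _ (by simp)]
      simp
    obtain ⟨h1, h2⟩ := ih fun j hj => by
      rw [hL j (by simp; omega)]
      simp [List.getElem?_append, hj]
    have hsplit : FreeGroup.mk ((i, b) :: L) = FreeGroup.mk [(i, b)] * FreeGroup.mk L := by simp
    set w := shearAction ℓ (FreeGroup.mk L) (Pi.single 0 1) with hw
    have hact : shearAction ℓ (FreeGroup.mk ((i, b) :: L)) (Pi.single 0 1) =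
        shear (fun j => ℓ j = some (i, b)) (shearInv (fun j => ℓ j = some (i, !b)) w) := by
      rw [hsplit, _root_.map_mul, shearAction_mk_singleton]
      rfl
    have h3 := shearInv_eq_zero_of_lt (s := fun j => ℓ j = some (i, !b)) h2 (by simp [hlast])
    have h4 : shearInv (fun j => ℓ j = some (i, !b)) w L.length = w L.length := by
      refine shearInv_eq_self fun j hj hs => hℓ j i (!b) hs ?_
      rw [hj, hlast, Bool.not_not]
    rw [hact]
    constructor
    · simp [shear, hlast, h4, h1, h3 (L.length + 1) (by simp)]
    · intro j hj
      simp at hj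
      obtain ⟨j, rfl⟩ : ∃ k, j = k + 1 := ⟨j - 1, by omega⟩
      simp [shear, h3 (j + 1) (by omega), h3 j (by omega)]

lemma exists_polyFun_ne {g : FreeGroup (Fin n)} (hg : g ≠ 1) :
    ∃ k, ∃ u ∈ polyFun (FreeGroup (Fin n)) k, u g ≠ u 1 := by
  have hred := FreeGroup.isReduced_toWord (x := g)
  set L := g.toWord with hLdef
  have hpos : L.length ≠ 0 := by
    simpa [hLdef] using hg
  refine ⟨_, _, (shearAction_mem_polyFun (fun j => L.reverse[j]?) (Pi.single 0 1) L.length).1, ?_⟩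
  have h := (shearAction_mk (ℓ := fun j => L.reverse[j]?) ?_ L fun _ _ => rfl).1
  · rw [hLdef, FreeGroup.mk_toWord, ← hLdef] at h
    simp [h, hpos]
  · intro j i b h1 h2
    obtain ⟨hj1, h1⟩ := List.getElem?_eq_some_iff.1 h1
    obtain ⟨hj2, h2⟩ := List.getElem?_eq_some_iff.1 h2
    have hc := List.IsChain.getElem (List.isChain_reverse.2 hred : List.IsChain
      (fun a b : Fin n × Bool => b.1 = a.1 → b.2 = a.2) L.reverse) j hj2
    rw [h1, h2] at hc
    simp at hc

/-- A finite-order automorphism of a free group acting trivially on the abelianization is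
trivial. -/
theorem eq_one_of_expSum_eq {f : FrAut n} (hf : ∀ i g, expSum i (f g) = expSum i g)
    (ht : IsOfFinOrder f) : f = 1 := by
  refine MulEquiv.ext fun x => ?_
  by_contra hx
  have hx' : x⁻¹ * f x ≠ 1 := fun h => hx (inv_mul_eq_one.1 h).symm
  obtain ⟨k, u, hu, hne⟩ := exists_polyFun_ne hx'
  have := congrFun (comp_eq_of_mem_polyFun hf ht k _ (translate_mem_polyFun hu x⁻¹)) x
  simp only [Function.comp_apply, inv_mul_cancel] at this
  exact hne this

/-- A nontrivial automorphism of odd order is conjugate to one sending some free generator `a`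
to `b * g`, where `b ≠ a` is a free generator and `g` does not involve `b`, and whose inverse
maps all free generators other than `b` into the factor omitting `a`. -/
theorem exists_conj_of_odd_orderOf (hn : 3 ≤ n) {f : FrAut n} (hodd : Odd (orderOf f))
    (hf : f ≠ 1) : ∃ (θ : FrAut n) (a b c : Fin n), a ≠ b ∧ c ≠ a ∧ c ≠ b ∧
      (∀ j ≠ b, (θ⁻¹ * f * θ)⁻¹ (FreeGroup.of j) ∈ Subgroup.closure (FreeGroup.of '' {a}ᶜ)) ∧
      ∃ g ∈ Subgroup.closure (FreeGroup.of '' {b}ᶜ),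
        (θ⁻¹ * f * θ) (FreeGroup.of a) = FreeGroup.of b * g := by
  by_contra hcon
  refine hf (eq_one_of_expSum_eq (fun i g => ?_) (orderOf_pos_iff.1 hodd.pos))
  by_contra hne
  refine hcon (exists_conj_of_odd hn hodd (almostInv_startsWith i) ⟨g, ?_⟩)
  rw [flux_startsWith, flux_startsWith]
  exact fun h => hne (Multiplicative.toAdd.injective h)

end TorsionFree

section Transvections

variable {n : ℕ}

lemma frAut_ext {φ ψ : FrAut n} (h : ∀ i, φ (FreeGroup.of i) = ψ (FreeGroup.of i)) : φ = ψ :=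
  MulEquiv.toMonoidHom_injective (FreeGroup.ext_hom _ _ h)

/-- The subgroup generated by the free generators other than `x_i`. -/
abbrev coFactor (i : Fin n) : Subgroup (FreeGroup (Fin n)) :=
  Subgroup.closure (FreeGroup.of '' {i}ᶜ)

lemma of_mem_coFactor {i j : Fin n} (h : j ≠ i) : FreeGroup.of j ∈ coFactor i :=
  Subgroup.subset_closure ⟨j, h, rfl⟩

/-- The endomorphism multiplying `x_i` by `u` on the left and by `w` on the right. -/
def transvectionHom (i : Fin n) (u w : FreeGroup (Fin n)) :
    FreeGroup (Fin n) →* FreeGroup (Fin n) :=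
  FreeGroup.lift (Function.update FreeGroup.of i (u * FreeGroup.of i * w))

lemma transvectionHom_of_mem (i : Fin n) (u w : FreeGroup (Fin n)) {g : FreeGroup (Fin n)}
    (hg : g ∈ coFactor i) : transvectionHom i u w g = g := by
  refine MonoidHom.eqOn_closure (f := transvectionHom i u w) (g := MonoidHom.id _) ?_ hg
  rintro _ ⟨j, hj, rfl⟩
  have : j ≠ i := hj
  simp [transvectionHom, this]

lemma transvectionHom_comp (i : Fin n) {u w : FreeGroup (Fin n)} (hu : u ∈ coFactor i)
    (hw : w ∈ coFactor i) :
    (transvectionHom i u w).comp (transvectionHom i u⁻¹ w⁻¹) = MonoidHom.id _ := by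
  refine FreeGroup.ext_hom _ _ fun j => ?_
  rcases eq_or_ne j i with rfl | hj
  · have h1 := transvectionHom_of_mem j u w (inv_mem hu)
    have h2 := transvectionHom_of_mem j u w (inv_mem hw)
    have h3 : transvectionHom j u w (FreeGroup.of j) = u * FreeGroup.of j * w := by
      simp [transvectionHom]
    have h4 : transvectionHom j u⁻¹ w⁻¹ (FreeGroup.of j) = u⁻¹ * FreeGroup.of j * w⁻¹ := by
      simp [transvectionHom]
    rw [MonoidHom.comp_apply, h4, _root_.map_mul, _root_.map_mul, h1, h2, h3]
    simp [mul_assoc]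
  · have := of_mem_coFactor hj
    rw [MonoidHom.comp_apply, transvectionHom_of_mem _ _ _ this, transvectionHom_of_mem _ _ _ this]
    rfl

/-- The automorphism multiplying `x_i` by `u` on the left and by `w` on the right, where `u` and
`w` do not involve `x_i`. -/
def transvection (i : Fin n) (u w : coFactor i) : FrAut n :=
  MonoidHom.toMulEquiv (transvectionHom i u w)
    (transvectionHom i (u : FreeGroup (Fin n))⁻¹ (w : FreeGroup (Fin n))⁻¹)
    (by simpa using transvectionHom_comp i (inv_mem u.2) (inv_mem w.2))
    (transvectionHom_comp i u.2 w.2)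

lemma transvection_of_mem (i : Fin n) (u w : coFactor i) {g : FreeGroup (Fin n)}
    (hg : g ∈ coFactor i) : transvection i u w g = g :=
  transvectionHom_of_mem i u w hg

@[simp] lemma transvection_of_self (i : Fin n) (u w : coFactor i) :
    transvection i u w (FreeGroup.of i) = u * FreeGroup.of i * w := by
  simp [transvection, transvectionHom]

lemma transvection_of_ne {i j : Fin n} (u w : coFactor i) (h : j ≠ i) :
    transvection i u w (FreeGroup.of j) = FreeGroup.of j :=
  transvection_of_mem i u w (of_mem_coFactor h)

lemma transvection_mul (i : Fin n) (u w u' w' : coFactor i) :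
    transvection i u w * transvection i u' w' = transvection i (u' * u) (w * w') := by
  refine frAut_ext fun j => ?_
  rcases eq_or_ne j i with rfl | hj
  · simp [transvection_of_mem, mul_assoc]
  · simp [transvection_of_ne, hj]

@[simp] lemma transvection_one (i : Fin n) : transvection i 1 1 = 1 := by
  refine frAut_ext fun j => ?_
  rcases eq_or_ne j i with rfl | hj
  · simp
  · simp [transvection_of_ne, hj]

lemma transvection_inv (i : Fin n) (u w : coFactor i) :
    (transvection i u w)⁻¹ = transvection i u⁻¹ w⁻¹ := by
  rw [inv_eq_iff_mul_eq_one, transvection_mul]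
  simp

/-- A normal subgroup containing an automorphism `f` that carries `x_a` to `x_b * g`, with `g` not
involving `x_b`, contains the transvection `x_a ↦ x_a * x_c`, provided that `f⁻¹ x_j` does not
involve `x_a` for `j ≠ b`. -/
lemma transvection_mem_of_apply_eq {N : Subgroup (FrAut n)} [N.Normal] {f : FrAut n} (hf : f ∈ N)
    {a b c : Fin n} (hab : a ≠ b) (hca : c ≠ a) (hcb : c ≠ b)
    (hinv : ∀ j ≠ b, f⁻¹ (FreeGroup.of j) ∈ coFactor a) {g : FreeGroup (Fin n)}
    (hg : g ∈ coFactor b) (hfa : f (FreeGroup.of a) = FreeGroup.of b * g) :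
    transvection a 1 ⟨FreeGroup.of c, of_mem_coFactor hca⟩ ∈ N := by
  have hg' : f⁻¹ g ∈ coFactor a := by
    have : coFactor b ≤ (coFactor a).comap (f⁻¹ : FrAut n).toMonoidHom := by
      refine (Subgroup.closure_le _).2 ?_
      rintro _ ⟨j, hj, rfl⟩
      exact hinv j hj
    exact this hg
  have hfb : f⁻¹ (FreeGroup.of b) = FreeGroup.of a * (f⁻¹ g)⁻¹ := by
    apply f.injective
    simp [hfa]
  set s := transvection a ⟨f⁻¹ (FreeGroup.of c), hinv c hcb⟩ 1 with hs
  set t := transvection b ⟨FreeGroup.of c, of_mem_coFactor hcb⟩ 1 with ht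
  set r := transvection a 1 ⟨FreeGroup.of b, of_mem_coFactor hab.symm⟩ with hr
  have hst : f * s * f⁻¹ = t := by
    refine frAut_ext fun j => ?_
    rcases eq_or_ne j b with rfl | hj
    · simp only [MulAut.mul_apply, hfb, _root_.map_mul, hs, ht,
        transvection_of_mem _ _ _ (inv_mem hg'), transvection_of_self]
      simp [hfa, mul_assoc]
    · simp only [MulAut.mul_apply, hs, ht, transvection_of_mem _ _ _ (hinv j hj),
        MulAut.apply_inv_self, transvection_of_ne _ _ hj]
  have hsr : s * r = r * s := by simp [hs, hr, transvection_mul]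
  have htr : t * r * t⁻¹ * r⁻¹ = transvection a 1 ⟨FreeGroup.of c, of_mem_coFactor hca⟩ := by
    have hta : ∀ u w, transvection b u w (FreeGroup.of a) = FreeGroup.of a := fun u w =>
      transvection_of_ne u w hab
    have htc : ∀ u w, transvection b u w (FreeGroup.of c) = FreeGroup.of c := fun u w =>
      transvection_of_ne u w hcb
    have hrb : ∀ u w, transvection a u w (FreeGroup.of b) = FreeGroup.of b := fun u w =>
      transvection_of_ne u w hab.symm
    have hrc : ∀ u w, transvection a u w (FreeGroup.of c) = FreeGroup.of c := fun u w =>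
      transvection_of_ne u w hca
    rw [ht, hr, transvection_inv, transvection_inv]
    refine frAut_ext fun j => ?_
    rcases eq_or_ne j a with rfl | hja
    · simp [hta, hrb, htc, hrc, mul_assoc]
    rcases eq_or_ne j b with rfl | hjb
    · simp [hrb, htc, hrc]
    · simp [transvection_of_ne, hja, hjb]
  have hmem : t * s⁻¹ ∈ N := by
    have := N.mul_mem hf (Subgroup.Normal.conj_mem ‹N.Normal› _ (N.inv_mem hf) s)
    rwa [show f * (s * f⁻¹ * s⁻¹) = t * s⁻¹ by rw [← hst]; group] at this
  rw [← htr, show t * r * t⁻¹ * r⁻¹ = t * s⁻¹ * (r * (t * s⁻¹)⁻¹ * r⁻¹) by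
    rw [_root_.mul_inv_rev, inv_inv]
    calc t * r * t⁻¹ * r⁻¹ = t * s⁻¹ * (s * r) * t⁻¹ * r⁻¹ := by group
      _ = _ := by rw [hsr]; group]
  exact N.mul_mem hmem (Subgroup.Normal.conj_mem ‹N.Normal› _ (N.inv_mem hmem) r)

/-- The automorphism permuting the free generators. -/
def permAut (σ : Equiv.Perm (Fin n)) : FrAut n := FreeGroup.freeGroupCongr σ

@[simp] lemma permAut_of (σ : Equiv.Perm (Fin n)) (i : Fin n) :
    permAut σ (FreeGroup.of i) = FreeGroup.of (σ i) := by
  simp [permAut]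

lemma permAut_mul (σ τ : Equiv.Perm (Fin n)) : permAut (σ * τ) = permAut σ * permAut τ :=
  frAut_ext fun i => by simp

@[simp] lemma permAut_one : permAut (1 : Equiv.Perm (Fin n)) = 1 :=
  frAut_ext fun i => by simp

lemma permAut_inv (σ : Equiv.Perm (Fin n)) : (permAut σ)⁻¹ = permAut σ⁻¹ := by
  rw [inv_eq_iff_mul_eq_one, ← permAut_mul]
  simp

/-- The endomorphism inverting the free generator `x_i`. -/
def inversionHom (i : Fin n) : FreeGroup (Fin n) →* FreeGroup (Fin n) :=
  FreeGroup.lift (Function.update FreeGroup.of i (FreeGroup.of i)⁻¹)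

lemma inversionHom_comp (i : Fin n) : (inversionHom i).comp (inversionHom i) = MonoidHom.id _ := by
  refine FreeGroup.ext_hom _ _ fun j => ?_
  rcases eq_or_ne j i with rfl | hj
  · simp [inversionHom]
  · simp [inversionHom, hj]

/-- The automorphism inverting the free generator `x_i`. -/
def inversion (i : Fin n) : FrAut n :=
  MonoidHom.toMulEquiv (inversionHom i) (inversionHom i) (inversionHom_comp i) (inversionHom_comp i)

@[simp] lemma inversion_of_self (i : Fin n) :
    inversion i (FreeGroup.of i) = (FreeGroup.of i)⁻¹ := by
  simp [inversion, inversionHom]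

lemma inversion_of_ne {i j : Fin n} (h : j ≠ i) :
    inversion i (FreeGroup.of j) = FreeGroup.of j := by
  simp [inversion, inversionHom, h]

lemma inversion_mul_self (i : Fin n) : inversion i * inversion i = 1 :=
  MulEquiv.toMonoidHom_injective (inversionHom_comp i)

lemma inversion_inv (i : Fin n) : (inversion i)⁻¹ = inversion i := by
  rw [inv_eq_iff_mul_eq_one, inversion_mul_self]

lemma permAut_conj_inversion (σ : Equiv.Perm (Fin n)) (i : Fin n) :
    permAut σ * inversion i * (permAut σ)⁻¹ = inversion (σ i) := by
  rw [mul_inv_eq_iff_eq_mul]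
  refine frAut_ext fun j => ?_
  rcases eq_or_ne j i with rfl | hj
  · simp
  · simp [inversion_of_ne, hj]

lemma permAut_conj_transvection (σ : Equiv.Perm (Fin n)) {i j : Fin n} (h : j ≠ i) :
    permAut σ * transvection i 1 ⟨FreeGroup.of j, of_mem_coFactor h⟩ * (permAut σ)⁻¹ =
      transvection (σ i) 1 ⟨FreeGroup.of (σ j), of_mem_coFactor (σ.injective.ne h)⟩ := by
  rw [mul_inv_eq_iff_eq_mul]
  refine frAut_ext fun k => ?_
  rcases eq_or_ne k i with rfl | hk
  · simp
  · simp [transvection_of_ne, hk]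

lemma inversion_conj_transvection {i j : Fin n} (h : j ≠ i) :
    inversion i * transvection i 1 ⟨FreeGroup.of j, of_mem_coFactor h⟩⁻¹ * (inversion i)⁻¹ =
      transvection i ⟨FreeGroup.of j, of_mem_coFactor h⟩ 1 := by
  rw [mul_inv_eq_iff_eq_mul]
  refine frAut_ext fun k => ?_
  rcases eq_or_ne k i with rfl | hk
  · simp [inversion_of_ne, h]
  · simp [transvection_of_ne, inversion_of_ne, hk]

end Transvections

section GromovProduct

/-- The length of the longest common prefix of two lists. -/
def lcpLength {α : Type*} [DecidableEq α] : List α → List α → ℕ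
  | a :: l, b :: m => if a = b then lcpLength l m + 1 else 0
  | _, _ => 0

lemma le_lcpLength_iff {α : Type*} [DecidableEq α] {m : ℕ} {l l' : List α} :
    m ≤ lcpLength l l' ↔ m ≤ l.length ∧ m ≤ l'.length ∧ l.take m = l'.take m := by
  induction l generalizing m l' with
  | nil => cases m <;> simp [lcpLength]
  | cons a l ih =>
    cases l' with
    | nil => cases m <;> simp [lcpLength]
    | cons b l' =>
      cases m with
      | zero => simp
      | succ m =>
        by_cases hab : a = b
        · simp [lcpLength, hab, ih]
        · simp [lcpLength, hab]

lemma exists_lcpLength_split {α : Type*} [DecidableEq α] (l l' : List α) :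
    ∃ p s s', l = p ++ s ∧ l' = p ++ s' ∧ p.length = lcpLength l l' ∧
      ∀ a ∈ s.head?, ∀ b ∈ s'.head?, a ≠ b := by
  induction l generalizing l' with
  | nil => exact ⟨[], [], l', rfl, rfl, by simp [lcpLength], by simp⟩
  | cons a l ih =>
    cases l' with
    | nil => exact ⟨[], a :: l, [], rfl, rfl, by simp [lcpLength], by simp⟩
    | cons b l' =>
      by_cases hab : a = b
      · obtain ⟨p, s, s', h1, h2, h3, h4⟩ := ih l'
        exact ⟨a :: p, s, s', by simp [← h1], by simp [← h2, hab], by simp [h3, lcpLength, hab], h4⟩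
      · exact ⟨[], a :: l, b :: l', rfl, rfl, by simp [lcpLength, hab], by simpa using hab⟩

variable {α : Type*} [DecidableEq α]

/-- The length of the longest common prefix of the reduced words of `x` and `y`. -/
def gromovProd (x y : FreeGroup α) : ℕ := lcpLength x.toWord y.toWord

lemma le_gromovProd_iff {x y : FreeGroup α} {m : ℕ} :
    m ≤ gromovProd x y ↔ m ≤ x.norm ∧ m ≤ y.norm ∧ x.toWord.take m = y.toWord.take m :=
  le_lcpLength_iff

lemma gromovProd_comm (x y : FreeGroup α) : gromovProd x y = gromovProd y x :=
  eq_of_forall_le_iff fun m => by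
    rw [le_gromovProd_iff, le_gromovProd_iff]
    tauto

lemma gromovProd_self (x : FreeGroup α) : gromovProd x x = x.norm :=
  eq_of_forall_le_iff fun m => by
    rw [le_gromovProd_iff]
    tauto

lemma min_gromovProd_le (x y z : FreeGroup α) :
    min (gromovProd x y) (gromovProd y z) ≤ gromovProd x z := by
  obtain ⟨h1, -, h2⟩ := le_gromovProd_iff.1 (min_le_left (gromovProd x y) (gromovProd y z))
  obtain ⟨-, h3, h4⟩ := le_gromovProd_iff.1 (min_le_right (gromovProd x y) (gromovProd y z))
  exact le_gromovProd_iff.2 ⟨h1, h3, h2.trans h4⟩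

lemma toWord_inv_mul (x y : FreeGroup α) :
    (x⁻¹ * y).toWord = FreeGroup.invRev (x.toWord.drop (gromovProd x y)) ++
      y.toWord.drop (gromovProd x y) := by
  obtain ⟨p, s, s', h1, h2, h3, h4⟩ := exists_lcpLength_split x.toWord y.toWord
  have hx := FreeGroup.isReduced_toWord (x := x)
  have hy := FreeGroup.isReduced_toWord (x := y)
  have hs : x.toWord.drop (gromovProd x y) = s := by
    rw [gromovProd, ← h3, h1, List.drop_left]
  have hs' : y.toWord.drop (gromovProd x y) = s' := by
    rw [gromovProd, ← h3, h2, List.drop_left]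
  rw [hs, hs']
  have hred : FreeGroup.IsReduced (FreeGroup.invRev s ++ s') := by
    rw [h1] at hx
    rw [h2] at hy
    refine List.isChain_append.2 ⟨?_, List.IsChain.right_of_append hy, ?_⟩
    · have hsr : FreeGroup.IsReduced s := List.IsChain.right_of_append hx
      exact FreeGroup.IsReduced.of_reduce_eq (by rw [FreeGroup.reduce_invRev, hsr.reduce_eq])
    · intro a ha b hb hab
      have ha' : (a.1, !a.2) ∈ s.head? := by
        cases s with
        | nil => simp [FreeGroup.invRev] at ha
        | cons c s =>
          simp [FreeGroup.invRev] at ha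
          simp [← ha]
      have hne := h4 _ ha' b hb
      by_contra hcon
      refine hne (Prod.ext hab ?_)
      revert hcon
      cases a.2 <;> cases b.2 <;> simp
  have hmul : x⁻¹ * y = FreeGroup.mk (FreeGroup.invRev s ++ s') := by
    conv_lhs => rw [← x.mk_toWord, ← y.mk_toWord, h1, h2]
    rw [← FreeGroup.mul_mk, ← FreeGroup.mul_mk, ← FreeGroup.mul_mk, ← FreeGroup.inv_mk]
    group
  rw [hmul, FreeGroup.toWord_mk, hred.reduce_eq]

lemma norm_inv_mul_add (x y : FreeGroup α) :
    (x⁻¹ * y).norm + 2 * gromovProd x y = x.norm + y.norm := by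
  obtain ⟨h1, h2, -⟩ := le_gromovProd_iff.1 (le_refl (gromovProd x y))
  have h := congrArg List.length (toWord_inv_mul x y)
  simp only [List.length_append, FreeGroup.invRev_length, List.length_drop] at h
  simp only [FreeGroup.norm] at h1 h2 ⊢
  omega

lemma two_mul_gromovProd_inv_lt {x : FreeGroup α} (hx : x ≠ 1) :
    2 * gromovProd x x⁻¹ < x.norm := by
  by_contra! hcon
  have hred := FreeGroup.isReduced_toWord (x := x)
  have hpos : x.norm ≠ 0 := by simpa using hx
  obtain ⟨h1, -, h2⟩ := le_gromovProd_iff.1 (le_refl (gromovProd x x⁻¹))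
  set m := gromovProd x x⁻¹
  set w := x.toWord with hw
  have hlen : w.length = x.norm := rfl
  have key : ∀ j (hj : j < m), w[j] = ((w[w.length - 1 - j]).1, !(w[w.length - 1 - j]).2) := by
    intro j hj
    have h3 := congrArg (fun l => l[j]?) h2
    simp only [List.getElem?_take, hj, if_true, FreeGroup.toWord_inv, ← hw, FreeGroup.invRev] at h3
    rw [List.getElem?_eq_getElem (by omega), List.getElem?_eq_getElem (by simp; omega)] at h3
    simpa using h3
  rcases Nat.even_or_odd' w.length with ⟨r, hr | hr⟩
  · have h3 := key (r - 1) (by omega)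
    have h4 := List.IsChain.getElem hred (r - 1) (by omega)
    simp only [show w.length - 1 - (r - 1) = r by omega] at h3
    simp only [show r - 1 + 1 = r by omega, h3] at h4
    simp at h4
  · have h3 := key r (by omega)
    simp only [show w.length - 1 - r = r by omega] at h3
    have h4 := congrArg Prod.snd h3
    simp at h4

end GromovProduct

section NielsenReduction

variable {n : ℕ}

/-- The inverse letter. -/
def invLetter (k : Fin n × Bool) : Fin n × Bool := (k.1, !k.2)

@[simp] lemma invLetter_fst (k : Fin n × Bool) : (invLetter k).1 = k.1 := rfl

lemma eq_or_eq_invLetter {k l : Fin n × Bool} (h : l.1 = k.1) : l = k ∨ l = invLetter k := by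
  obtain ⟨i, b⟩ := k
  obtain ⟨j, c⟩ := l
  obtain rfl : j = i := h
  cases b <;> cases c <;> simp [invLetter]

/-- The image of a letter under an automorphism. -/
def letterImage (φ : FrAut n) (k : Fin n × Bool) : FreeGroup (Fin n) := φ (FreeGroup.mk [k])

@[simp] lemma letterImage_invLetter (φ : FrAut n) (k : Fin n × Bool) :
    letterImage φ (invLetter k) = (letterImage φ k)⁻¹ := by
  rw [letterImage, letterImage, ← _root_.map_inv, FreeGroup.inv_mk]
  rfl

lemma letterImage_ne_one (φ : FrAut n) (k : Fin n × Bool) : letterImage φ k ≠ 1 := by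
  rw [letterImage, Ne, map_eq_one_iff φ φ.injective, ← FreeGroup.toWord_eq_nil_iff]
  simp [FreeGroup.toWord_mk]

lemma norm_letterImage_pos (φ : FrAut n) (k : Fin n × Bool) : 0 < (letterImage φ k).norm := by
  simpa [Nat.pos_iff_ne_zero] using letterImage_ne_one φ k

/-- The images of the letters are a Nielsen reduced tuple: no more than half of an image cancels on
either side, and no image is cancelled completely. -/
structure NielsenReduced (φ : FrAut n) : Prop where
  two_mul_le : ∀ k l, k ≠ l →
    2 * gromovProd (letterImage φ k) (letterImage φ l) ≤ (letterImage φ k).norm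
  add_lt : ∀ k l l', l ≠ k → l' ≠ invLetter k →
    gromovProd (letterImage φ k) (letterImage φ l) +
      gromovProd (letterImage φ k)⁻¹ (letterImage φ l') < (letterImage φ k).norm

lemma NielsenReduced.exists_cancellation {φ : FrAut n} (h : NielsenReduced φ)
    (L : List (Fin n × Bool)) : ∀ k, FreeGroup.IsReduced (k :: L) →
      ∃ β, (∀ l ≠ k, gromovProd (letterImage φ k) (letterImage φ l) + β <
          (letterImage φ k).norm) ∧ β < (letterImage φ k).norm ∧
        (letterImage φ k).norm ≤
          gromovProd (φ (FreeGroup.mk (k :: L))) (letterImage φ k) + β ∧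
        (letterImage φ k).norm + L.length ≤ (φ (FreeGroup.mk (k :: L))).norm + β := by
  induction L with
  | nil =>
    intro k _
    have hpos := norm_letterImage_pos φ k
    refine ⟨0, fun l hl => ?_, hpos, ?_, ?_⟩
    · have := h.two_mul_le k l hl.symm
      omega
    · exact (gromovProd_self (letterImage φ k)).ge
    · exact le_rfl
  | cons l L ih =>
    intro k hk
    obtain ⟨hkl, hl⟩ := List.isChain_cons_cons.1 hk
    have hne : invLetter k ≠ l := by
      rintro rfl
      simpa [invLetter] using hkl rfl
    obtain ⟨β, h1, h2, h3, h4⟩ := ih l hl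
    have h5 := h1 _ hne
    have h6 := norm_letterImage_pos φ k
    have h7 := h.two_mul_le _ _ hne
    have h8 := fun l' hl' => h.add_lt k l' l hl' hne.symm
    have hw : φ (FreeGroup.mk (k :: l :: L)) = letterImage φ k * φ (FreeGroup.mk (l :: L)) := by
      rw [letterImage, ← _root_.map_mul, FreeGroup.mul_mk]
      rfl
    rw [hw]
    rw [letterImage_invLetter] at h5 h7
    rw [FreeGroup.norm_inv_eq] at h7
    set x := letterImage φ k
    set y := letterImage φ l
    set w := φ (FreeGroup.mk (l :: L))
    have h9 : gromovProd x⁻¹ w = gromovProd x⁻¹ y := by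
      have i1 := min_gromovProd_le x⁻¹ y w
      have i2 := min_gromovProd_le x⁻¹ w y
      rw [gromovProd_comm y x⁻¹] at h5
      rw [gromovProd_comm y w] at i1
      omega
    have h10 := norm_inv_mul_add x⁻¹ w
    have h11 := norm_inv_mul_add (x * w) x
    rw [inv_inv, FreeGroup.norm_inv_eq] at h10
    rw [show (x * w)⁻¹ * x = w⁻¹ by group, FreeGroup.norm_inv_eq] at h11
    rw [gromovProd_comm y x⁻¹] at h5
    refine ⟨gromovProd x⁻¹ y, h8, by omega, by omega, ?_⟩
    simp only [List.length_cons]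
    omega

lemma NielsenReduced.norm_le {φ : FrAut n} (h : NielsenReduced φ) (g : FreeGroup (Fin n)) :
    g.norm ≤ (φ g).norm := by
  have hred := FreeGroup.isReduced_toWord (x := g)
  rw [← g.mk_toWord]
  rcases hL : g.toWord with _ | ⟨k, L⟩
  · simp [← FreeGroup.one_eq_mk]
  · rw [hL] at hred
    obtain ⟨β, -, h1, -, h2⟩ := h.exists_cancellation L k hred
    rw [FreeGroup.norm, FreeGroup.toWord_mk, hred.reduce_eq, List.length_cons]
    omega

lemma NielsenReduced.exists_letter {φ : FrAut n} (h : NielsenReduced φ) (j : Fin n) :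
    ∃ k, φ⁻¹ (FreeGroup.of j) = FreeGroup.mk [k] := by
  have h1 := h.norm_le (φ⁻¹ (FreeGroup.of j))
  rw [MulAut.apply_inv_self, FreeGroup.norm_of] at h1
  have h2 := letterImage_ne_one φ⁻¹ (j, true)
  rw [← FreeGroup.mk_toWord (x := φ⁻¹ (FreeGroup.of j))]
  rcases hL : (φ⁻¹ (FreeGroup.of j)).toWord with _ | ⟨k, _ | ⟨l, L⟩⟩
  · exact absurd (FreeGroup.toWord_eq_nil_iff.1 hL) h2
  · exact ⟨k, rfl⟩
  · rw [FreeGroup.norm, hL] at h1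
    simp at h1

/-- A numerical code for words. -/
noncomputable def wordCode (L : List (Fin n × Bool)) : ℕ :=
  Nat.ofDigits (Fintype.card (Fin n × Bool) + 2)
    (L.map fun k => (Fintype.equivFin (Fin n × Bool) k : ℕ))

lemma wordCode_injective_of_length {L L' : List (Fin n × Bool)} (hlen : L.length = L'.length)
    (h : wordCode L = wordCode L') : L = L' := by
  have hdig : ∀ M : List (Fin n × Bool), ∀ d ∈ M.map fun k =>
      (Fintype.equivFin (Fin n × Bool) k : ℕ), d < Fintype.card (Fin n × Bool) + 2 := by
    intro M d hd
    obtain ⟨k, -, rfl⟩ := List.mem_map.1 hd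
    exact (Fin.is_lt _).trans (by omega)
  have := Nat.ofDigits_inj_of_len_eq (by omega) (by simpa using hlen) (hdig L) (hdig L') h
  exact List.map_injective_iff.2
    (Fin.val_injective.comp (Fintype.equivFin (Fin n × Bool)).injective) this

lemma wordCode_append_lt {p p' : List (Fin n × Bool)} (hlen : p.length = p'.length)
    (h : wordCode p < wordCode p') (s : List (Fin n × Bool)) :
    wordCode (p ++ s) < wordCode (p' ++ s) := by
  simp only [wordCode, List.map_append, Nat.ofDigits_append, List.length_map, hlen] at h ⊢
  omega

/-- The code of the first half of the reduced word of `x`. -/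
noncomputable def halfCode (x : FreeGroup (Fin n)) : ℕ := wordCode (x.toWord.take (x.norm / 2))

/-- If `x` has even length and cancels exactly half of itself in `x⁻¹ * y`, then passing from `y`
to `x⁻¹ * y` replaces the first half of `x` by the first half of `x⁻¹` in the first half of `y`. -/
lemma halfCode_inv_mul_lt {x y : FreeGroup (Fin n)} {r : ℕ} (hx : x.norm = 2 * r)
    (hy : 2 * r ≤ y.norm) (hr : gromovProd x y = r) (hlt : halfCode x⁻¹ < halfCode x) :
    (x⁻¹ * y).norm = y.norm ∧ halfCode (x⁻¹ * y) < halfCode y ∧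
      halfCode (x⁻¹ * y)⁻¹ = halfCode y⁻¹ := by
  have h1 := norm_inv_mul_add x y
  have hnorm : (x⁻¹ * y).norm = y.norm := by omega
  have hword := toWord_inv_mul x y
  have hlen : x.toWord.length = 2 * r := hx
  have hxinv : FreeGroup.invRev (x.toWord.drop r) = x⁻¹.toWord.take r := by
    rw [FreeGroup.toWord_inv, FreeGroup.invRev, FreeGroup.invRev, List.take_reverse]
    simp [hlen, show 2 * r - r = r by omega]
  have htake : x.toWord.take r = y.toWord.take r := (le_gromovProd_iff.1 hr.ge).2.2
  refine ⟨hnorm, ?_, ?_⟩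
  · obtain ⟨t, ht⟩ : ∃ t, y.norm / 2 = r + t := ⟨y.norm / 2 - r, by omega⟩
    have e1 : (x⁻¹ * y).toWord.take (r + t) =
        x⁻¹.toWord.take r ++ (y.toWord.drop r).take t := by
      have hl : (x⁻¹.toWord.take r).length = r := by
        simp [hlen]
        omega
      rw [hword, hr, hxinv, List.take_append, hl, Nat.add_sub_cancel_left,
        List.take_of_length_le (by omega)]
    have e2 : y.toWord.take (r + t) = x.toWord.take r ++ (y.toWord.drop r).take t := by
      rw [htake, List.take_add]
    rw [halfCode, halfCode, FreeGroup.norm_inv_eq, hx, Nat.mul_div_cancel_left r two_pos] at hlt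
    rw [halfCode, halfCode, hnorm, ht, e1, e2]
    refine wordCode_append_lt ?_ hlt _
    simp [hlen]
  · have h2 := norm_inv_mul_add (x⁻¹ * y)⁻¹ y⁻¹
    rw [show (x⁻¹ * y)⁻¹⁻¹ * y⁻¹ = x⁻¹ by group] at h2
    simp only [FreeGroup.norm_inv_eq] at h2
    have h3 : y.norm / 2 ≤ gromovProd (x⁻¹ * y)⁻¹ y⁻¹ := by omega
    rw [halfCode, halfCode, FreeGroup.norm_inv_eq, FreeGroup.norm_inv_eq, hnorm,
      (le_gromovProd_iff.1 h3).2.2]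

lemma halfCode_inv_ne {x : FreeGroup (Fin n)} (hx : x ≠ 1) {r : ℕ} (hr : x.norm = 2 * r) :
    halfCode x⁻¹ ≠ halfCode x := by
  intro h
  rw [halfCode, halfCode, FreeGroup.norm_inv_eq, hr, Nat.mul_div_cancel_left r two_pos] at h
  have hlen : x.toWord.length = 2 * r := hr
  have h1 := wordCode_injective_of_length (by simp [hlen]) h
  have h2 := two_mul_gromovProd_inv_lt hx
  have h3 : r ≤ gromovProd x x⁻¹ :=
    le_gromovProd_iff.2 ⟨by omega, by rw [FreeGroup.norm_inv_eq]; omega, h1.symm⟩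
  omega

end NielsenReduction

section NielsenGeneration

variable {n : ℕ}

lemma mk_singleton_false (i : Fin n) : FreeGroup.mk [(i, false)] = (FreeGroup.of i)⁻¹ := rfl

lemma mk_singleton_true (i : Fin n) : FreeGroup.mk [(i, true)] = FreeGroup.of i := rfl

lemma left_transvection_mem {K : Subgroup (FrAut n)}
    (ht : ∀ (i j : Fin n) (h : j ≠ i), transvection i 1 ⟨FreeGroup.of j, of_mem_coFactor h⟩ ∈ K)
    (he : ∀ i, inversion i ∈ K) {i j : Fin n} (h : j ≠ i) :
    transvection i ⟨FreeGroup.of j, of_mem_coFactor h⟩ 1 ∈ K := by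
  rw [← inversion_conj_transvection h]
  refine K.mul_mem (K.mul_mem (he i) ?_) (K.inv_mem (he i))
  simpa [transvection_inv] using K.inv_mem (ht i j h)

/-- A subgroup containing the right transvections and the inversions realizes the Nielsen move
that multiplies one letter by the inverse of another. -/
lemma exists_nielsen_move {K : Subgroup (FrAut n)}
    (ht : ∀ (i j : Fin n) (h : j ≠ i), transvection i 1 ⟨FreeGroup.of j, of_mem_coFactor h⟩ ∈ K)
    (he : ∀ i, inversion i ∈ K) {k l : Fin n × Bool} (hkl : k.1 ≠ l.1) :
    ∃ ν ∈ K, ν (FreeGroup.mk [l]) = (FreeGroup.mk [k])⁻¹ * FreeGroup.mk [l] ∧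
      ∀ m : Fin n × Bool, m.1 ≠ l.1 → ν (FreeGroup.mk [m]) = FreeGroup.mk [m] := by
  obtain ⟨j, b⟩ := k
  obtain ⟨i, c⟩ := l
  replace hkl : j ≠ i := hkl
  have hfix : ∀ u w, ∀ m : Fin n × Bool, m.1 ≠ i →
      transvection i u w (FreeGroup.mk [m]) = FreeGroup.mk [m] := by
    rintro u w ⟨m, d⟩ hm
    have := transvection_of_ne u w hm
    cases d
    · rw [mk_singleton_false, _root_.map_inv, this]
    · rw [mk_singleton_true, this]
  have hl := left_transvection_mem ht he hkl
  have hr := ht i j hkl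
  cases c <;> cases b
  · exact ⟨_, K.inv_mem hr, by simp [transvection_inv, mk_singleton_false],
      by rw [transvection_inv]; exact hfix _ _⟩
  · exact ⟨_, hr, by simp [mk_singleton_false, mk_singleton_true], hfix _ _⟩
  · exact ⟨_, hl, by simp [mk_singleton_false, mk_singleton_true], hfix _ _⟩
  · exact ⟨_, K.inv_mem hl, by simp [transvection_inv, mk_singleton_true],
      by rw [transvection_inv]; exact hfix _ _⟩

lemma permAut_swap {i j : Fin n} (hij : i ≠ j) : permAut (Equiv.swap i j) =
    transvection i 1 ⟨FreeGroup.of j, of_mem_coFactor hij.symm⟩ *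
      (transvection j 1 ⟨FreeGroup.of i, of_mem_coFactor hij⟩)⁻¹ *
      transvection i ⟨FreeGroup.of j, of_mem_coFactor hij.symm⟩ 1 * inversion j := by
  refine frAut_ext fun k => ?_
  have h1 : ∀ u w, transvection i u w (FreeGroup.of j) = FreeGroup.of j := fun u w =>
    transvection_of_ne u w hij.symm
  have h2 : ∀ u w, transvection j u w (FreeGroup.of i) = FreeGroup.of i := fun u w =>
    transvection_of_ne u w hij
  rw [transvection_inv]
  rcases eq_or_ne k i with rfl | hki
  · simp [h1, h2, inversion_of_ne hij]
  rcases eq_or_ne k j with rfl | hkj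
  · simp [h1]
  · simp [transvection_of_ne, inversion_of_ne, Equiv.swap_apply_of_ne_of_ne, hki, hkj]

lemma permAut_mem {K : Subgroup (FrAut n)}
    (ht : ∀ (i j : Fin n) (h : j ≠ i), transvection i 1 ⟨FreeGroup.of j, of_mem_coFactor h⟩ ∈ K)
    (he : ∀ i, inversion i ∈ K) (σ : Equiv.Perm (Fin n)) : permAut σ ∈ K := by
  induction σ using Equiv.Perm.swap_induction_on with
  | one => simp
  | swap_mul σ i j hij ih =>
    rw [permAut_mul, permAut_swap hij]
    exact K.mul_mem (K.mul_mem (K.mul_mem (K.mul_mem (ht i j hij.symm) (K.inv_mem (ht j i hij)))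
      (left_transvection_mem ht he hij.symm)) (he j)) ih

lemma mem_of_forall_letter {K : Subgroup (FrAut n)}
    (ht : ∀ (i j : Fin n) (h : j ≠ i), transvection i 1 ⟨FreeGroup.of j, of_mem_coFactor h⟩ ∈ K)
    (he : ∀ i, inversion i ∈ K) (A : Finset (Fin n)) :
    ∀ (ψ : FrAut n) (σ : Fin n → Fin n), (∀ j, ψ (FreeGroup.of j) =
      if j ∈ A then (FreeGroup.of (σ j))⁻¹ else FreeGroup.of (σ j)) → ψ ∈ K := by
  induction A using Finset.induction_on with
  | empty =>
    intro ψ σ h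
    simp only [Finset.notMem_empty, if_false] at h
    have hinj : Function.Injective σ := fun i j hij =>
      FreeGroup.of_injective (ψ.injective (by rw [h, h, hij]))
    have : ψ = permAut (Equiv.ofBijective σ (Finite.injective_iff_bijective.1 hinj)) :=
      frAut_ext fun j => by simp [h]
    rw [this]
    exact permAut_mem ht he _
  | insert i A hi ih =>
    intro ψ σ h
    have := ih (ψ * inversion i) σ fun j => by
      rcases eq_or_ne j i with rfl | hj
      · simp [h, hi]
      · simp [inversion_of_ne hj, h, hj]
    exact (K.mul_mem_cancel_right (he i)).1 this

/-- **Nielsen's theorem**: the automorphism group of a free group of finite rank is generated by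
the transvections and the inversions. -/
theorem eq_top_of_transvection_mem {K : Subgroup (FrAut n)}
    (ht : ∀ (i j : Fin n) (h : j ≠ i), transvection i 1 ⟨FreeGroup.of j, of_mem_coFactor h⟩ ∈ K)
    (he : ∀ i, inversion i ∈ K) : K = ⊤ := by
  suffices H : ∀ s e : ℕ, ∀ φ : FrAut n, ∑ k, (letterImage φ k).norm = s →
      ∑ k, halfCode (letterImage φ k) = e → φ ∈ K from
    (Subgroup.eq_top_iff' K).2 fun φ => H _ _ φ rfl rfl
  intro s
  induction s using Nat.strong_induction_on with | _ s ihs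
  intro e
  induction e using Nat.strong_induction_on with | _ e ihe
  intro φ hs he'
  have hmove : ∀ k l : Fin n × Bool, k.1 ≠ l.1 → ∃ φ' : FrAut n, (φ' ∈ K → φ ∈ K) ∧
      letterImage φ' l = (letterImage φ k)⁻¹ * letterImage φ l ∧
      ∀ m : Fin n × Bool, m.1 ≠ l.1 → letterImage φ' m = letterImage φ m := by
    intro k l hkl
    obtain ⟨ν, hν, h1, h2⟩ := exists_nielsen_move ht he hkl
    refine ⟨φ * ν, (K.mul_mem_cancel_right hν).1, ?_, fun m hm => ?_⟩
    · rw [letterImage, MulAut.mul_apply, h1, _root_.map_mul, _root_.map_inv]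
      rfl
    · simp [letterImage, h2 m hm]
  by_contra hφ
  have hnorm : ∀ k l : Fin n × Bool, k ≠ l →
      2 * gromovProd (letterImage φ k) (letterImage φ l) ≤ (letterImage φ k).norm := by
    intro k l hkl
    by_contra! hcon
    have hfst : k.1 ≠ l.1 := by
      intro hfst
      rcases eq_or_eq_invLetter hfst.symm with rfl | rfl
      · exact hkl rfl
      · have := two_mul_gromovProd_inv_lt (letterImage_ne_one φ k)
        rw [letterImage_invLetter] at hcon
        omega
    obtain ⟨φ', hK, h1, h2⟩ := hmove k l hfst
    have h3 := norm_inv_mul_add (letterImage φ k) (letterImage φ l)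
    have h4 : (letterImage φ' l).norm < (letterImage φ l).norm := by
      rw [h1]
      omega
    refine hφ (hK (ihs _ ?_ _ φ' rfl rfl))
    rw [← hs]
    refine Finset.sum_lt_sum (fun m _ => ?_) ⟨l, Finset.mem_univ _, h4⟩
    by_cases hm : m.1 = l.1
    · rcases eq_or_eq_invLetter hm with rfl | rfl
      · exact h4.le
      · simpa using h4.le
    · rw [h2 m hm]
  have hcode : ∀ k l : Fin n × Bool, ∀ r, l ≠ k → (letterImage φ k).norm = 2 * r →
      gromovProd (letterImage φ k) (letterImage φ l) = r →
      ¬ halfCode (letterImage φ k)⁻¹ < halfCode (letterImage φ k) := by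
    intro k l r hkl hr hgp hlt
    have hfst : k.1 ≠ l.1 := by
      intro hfst
      rcases eq_or_eq_invLetter hfst.symm with rfl | rfl
      · exact hkl rfl
      · have := two_mul_gromovProd_inv_lt (letterImage_ne_one φ k)
        rw [letterImage_invLetter] at hgp
        omega
    obtain ⟨φ', hK, h1, h2⟩ := hmove k l hfst
    have h3 := hnorm l k hkl
    rw [gromovProd_comm, hgp] at h3
    obtain ⟨h4, h5, h6⟩ := halfCode_inv_mul_lt hr h3 hgp hlt
    rw [← h1] at h4 h5 h6
    have hother : ∀ m, (letterImage φ' m).norm = (letterImage φ m).norm := by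
      intro m
      by_cases hm : m.1 = l.1
      · rcases eq_or_eq_invLetter hm with rfl | rfl
        · exact h4
        · simpa using h4
      · rw [h2 m hm]
    refine hφ (hK (ihe _ ?_ φ' ?_ rfl))
    · rw [← he']
      refine Finset.sum_lt_sum (fun m _ => ?_) ⟨l, Finset.mem_univ _, h5⟩
      by_cases hm : m.1 = l.1
      · rcases eq_or_eq_invLetter hm with rfl | rfl
        · exact h5.le
        · simpa using h6.le
      · rw [h2 m hm]
    · rw [← hs]
      exact Finset.sum_congr rfl fun m _ => hother m
  have hred : NielsenReduced φ := by
    refine ⟨hnorm, fun k l l' hl hl' => ?_⟩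
    by_contra! hcon
    have h1 := hnorm k l hl.symm
    have h2 := hnorm (invLetter k) l' hl'.symm
    rw [letterImage_invLetter, FreeGroup.norm_inv_eq] at h2
    obtain ⟨r, hr⟩ : ∃ r, (letterImage φ k).norm = 2 * r :=
      ⟨gromovProd (letterImage φ k) (letterImage φ l), by omega⟩
    have h3 := hcode k l r hl hr (by omega)
    have h4 := hcode (invLetter k) l' r hl'
      (by rw [letterImage_invLetter, FreeGroup.norm_inv_eq, hr])
      (by rw [letterImage_invLetter]; omega)
    rw [letterImage_invLetter, inv_inv] at h4
    exact halfCode_inv_ne (letterImage_ne_one φ k) hr (by omega)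
  choose σ hσ using hred.exists_letter
  refine hφ (inv_inv φ ▸ K.inv_mem (mem_of_forall_letter ht he {j | (σ j).2 = false} φ⁻¹
    (fun j => (σ j).1) fun j => ?_))
  rw [hσ]
  rcases hj : σ j with ⟨i, _ | _⟩ <;> simp [hj, mk_singleton_false, mk_singleton_true]

end NielsenGeneration

section NormalClosures

variable {n : ℕ}

lemma transvection_mem_of_normal {N : Subgroup (FrAut n)} [hN : N.Normal] {a c : Fin n}
    (hca : c ≠ a) (h : transvection a 1 ⟨FreeGroup.of c, of_mem_coFactor hca⟩ ∈ N)
    (i j : Fin n) (hji : j ≠ i) : transvection i 1 ⟨FreeGroup.of j, of_mem_coFactor hji⟩ ∈ N := by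
  obtain ⟨σ, rfl, rfl⟩ : ∃ σ : Equiv.Perm (Fin n), σ a = i ∧ σ c = j := by
    have hi : i ≠ Equiv.swap a i c := fun h => hca <|
      ((Equiv.swap a i).injective ((Equiv.swap_apply_left a i).trans h)).symm
    exact ⟨Equiv.swap (Equiv.swap a i c) j * Equiv.swap a i,
      by simp [Equiv.swap_apply_of_ne_of_ne hi hji.symm], by simp⟩
  rw [← permAut_conj_transvection σ hca]
  exact hN.conj_mem _ h (permAut σ)

lemma inversion_mul_inversion_mem_of_normal {N : Subgroup (FrAut n)} [hN : N.Normal]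
    (ht : ∀ (i j : Fin n) (h : j ≠ i), transvection i 1 ⟨FreeGroup.of j, of_mem_coFactor h⟩ ∈ N)
    (i j : Fin n) : inversion i * inversion j ∈ N := by
  rcases eq_or_ne i j with rfl | hij
  · simp [inversion_mul_self]
  have hl : transvection i ⟨FreeGroup.of j, of_mem_coFactor hij.symm⟩ 1 ∈ N := by
    rw [← inversion_conj_transvection hij.symm]
    refine hN.conj_mem _ ?_ _
    simpa [transvection_inv] using N.inv_mem (ht i j hij.symm)
  have hq := N.mul_mem (N.mul_mem (ht i j hij.symm) (N.inv_mem (ht j i hij))) hl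
  rw [← mul_inv_eq_iff_eq_mul.2 (permAut_swap hij), inversion_inv] at hq
  have hswap : (permAut (Equiv.swap i j))⁻¹ = permAut (Equiv.swap i j) := by simp [permAut_inv]
  have hconj := permAut_conj_inversion (Equiv.swap i j) j
  rw [hswap, Equiv.swap_apply_right] at hconj
  rw [← hconj, mul_assoc]
  exact N.mul_mem hq hq

lemma detρ_inversion (i : Fin n) : detρ n (inversion i) = -1 := by
  have hmat : mat (inversion i) = Matrix.diagonal fun j => if j = i then -1 else 1 := by
    ext k j
    rw [mat, Matrix.of_apply, Matrix.diagonal_apply]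
    rcases eq_or_ne j i with rfl | hj
    · rcases eq_or_ne k j with rfl | hk
      · simp [expSum]
      · simp [expSum, hk, hk.symm]
    · rw [inversion_of_ne hj]
      rcases eq_or_ne k j with rfl | hk
      · simp [expSum, hj]
      · simp [expSum, hk, hk.symm]
  refine Units.ext ?_
  change (mat (inversion i)).det = -1
  simp [hmat, Finset.prod_ite_eq']

lemma SAut_le_of_transvection_mem [NeZero n] {N : Subgroup (FrAut n)} [hN : N.Normal]
    (hle : N ≤ SAut n)
    (ht : ∀ (i j : Fin n) (h : j ≠ i), transvection i 1 ⟨FreeGroup.of j, of_mem_coFactor h⟩ ∈ N) :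
    SAut n ≤ N := by
  have htop : N ⊔ Subgroup.zpowers (inversion (0 : Fin n)) = ⊤ := by
    refine eq_top_of_transvection_mem (fun i j h => Subgroup.mem_sup_left (ht i j h)) fun i => ?_
    have h := Subgroup.mul_mem_sup (inversion_mul_inversion_mem_of_normal ht i 0)
      (Subgroup.mem_zpowers (inversion (0 : Fin n)))
    rwa [mul_assoc, inversion_mul_self, mul_one] at h
  intro φ hφ
  have hmem : φ ∈ N ⊔ Subgroup.zpowers (inversion (0 : Fin n)) := htop ▸ Subgroup.mem_top φ
  obtain ⟨ν, hν, _, ⟨k, rfl⟩, rfl⟩ := Subgroup.mem_sup_of_normal_left.1 hmem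
  have hk : detρ n (inversion 0 ^ k) = 1 := MonoidHom.mem_ker.1
    (((SAut n).mul_mem_cancel_left (hle hν)).1 hφ)
  rw [_root_.map_zpow, detρ_inversion] at hk
  have heven : Even k := by
    by_contra hodd
    rw [Int.not_even_iff_odd] at hodd
    rw [hodd.neg_one_zpow] at hk
    exact absurd hk (by decide)
  obtain ⟨m, rfl⟩ := heven
  have : inversion (0 : Fin n) ^ (m + m) = 1 := by
    rw [← two_mul, _root_.zpow_mul, zpow_two, inversion_mul_self, _root_.one_zpow]
  simpa [this] using hν

/-- The normal closure of a nontrivial automorphism of odd order is `SAut(F_n)`. -/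
theorem normalClosure_singleton_eq_SAut (hn : 3 ≤ n) {f : FrAut n} (hodd : Odd (orderOf f))
    (hf : f ≠ 1) : Subgroup.normalClosure {f} = SAut n := by
  have : NeZero n := ⟨by omega⟩
  have hfS : f ∈ SAut n := by
    have h1 : orderOf (detρ n f) ∣ orderOf f := orderOf_map_dvd _ f
    have h2 : orderOf (detρ n f) ∣ 2 := orderOf_dvd_of_pow_eq_one (Int.units_sq _)
    exact orderOf_eq_one_iff.1 (Nat.eq_one_of_dvd_coprimes
      (Nat.coprime_two_right.2 hodd) h1 h2)
  have hSnormal : (SAut n).Normal := MonoidHom.normal_ker _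
  have hle : Subgroup.normalClosure {f} ≤ SAut n :=
    Subgroup.normalClosure_le_normal (by simpa using hfS)
  refine le_antisymm hle ?_
  obtain ⟨θ, a, b, c, hab, hca, hcb, hinv, g, hg, hfa⟩ := exists_conj_of_odd_orderOf hn hodd hf
  have hmem : θ⁻¹ * f * θ ∈ Subgroup.normalClosure {f} := by
    simpa using Subgroup.normalClosure_normal.conj_mem f
      (Subgroup.subset_normalClosure (Set.mem_singleton f)) θ⁻¹
  exact SAut_le_of_transvection_mem hle
    (transvection_mem_of_normal hca (transvection_mem_of_apply_eq hmem hab hca hcb hinv hg hfa))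

lemma exists_mem_odd_orderOf {Γ : Type*} [Group Γ] (G : Subgroup Γ) [Finite G]
    (h2 : ¬ ∃ k : ℕ, Nat.card G = 2 ^ k) : ∃ f ∈ G, Odd (orderOf f) ∧ f ≠ 1 := by
  rcases Nat.eq_two_pow_or_exists_odd_prime_and_dvd (Nat.card G) with ⟨k, hk⟩ | ⟨p, hp, hdvd, hodd⟩
  · exact absurd ⟨k, hk⟩ h2
  · have := Fact.mk hp
    obtain ⟨f, hf⟩ := exists_prime_orderOf_dvd_card' p hdvd
    rw [← Subgroup.orderOf_coe] at hf
    refine ⟨f, f.2, hf ▸ hodd, fun h => ?_⟩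
    rw [h, orderOf_one] at hf
    exact hp.one_lt.ne hf

end NormalClosures

/-- **Theorem 1.** For `n ≥ 3`, if `G` is a nontrivial finite subgroup of `Aut(F_n)` whose
order is not a power of `2`, then the normal closure of `G` is `SAut(F_n)` if `G ⊆ SAut(F_n)`
and is all of `Aut(F_n)` otherwise. -/
theorem normalClosure_finite_subgroup_aut (n : ℕ) (hn : 3 ≤ n)
    (G : Subgroup (FrAut n)) (hG : G ≠ ⊥) (hfin : Finite G)
    (h2 : ¬ ∃ k : ℕ, Nat.card G = 2 ^ k) :
    (G ≤ SAut n → Subgroup.normalClosure (G : Set (FrAut n)) = SAut n) ∧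
    (¬ G ≤ SAut n → Subgroup.normalClosure (G : Set (FrAut n)) = ⊤) := by
  obtain ⟨f, hfG, hodd, hf⟩ := exists_mem_odd_orderOf G h2
  have hle : SAut n ≤ Subgroup.normalClosure (G : Set (FrAut n)) := by
    rw [← normalClosure_singleton_eq_SAut hn hodd hf]
    exact Subgroup.normalClosure_mono (by simpa using hfG)
  have hSnormal : (SAut n).Normal := MonoidHom.normal_ker _
  refine ⟨fun h => le_antisymm (Subgroup.normalClosure_le_normal h) hle, fun h => ?_⟩
  obtain ⟨g, hg, hgS⟩ := Set.not_subset.1 h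
  have hgN : g ∈ Subgroup.normalClosure (G : Set (FrAut n)) := Subgroup.subset_normalClosure hg
  have hdet : detρ n g = -1 := (Int.units_eq_one_or _).resolve_left hgS
  refine (Subgroup.eq_top_iff' _).2 fun φ => ?_
  rcases Int.units_eq_one_or (detρ n φ) with hφ | hφ
  · exact hle hφ
  · refine (Subgroup.mul_mem_cancel_right _ hgN).1 (hle (MonoidHom.mem_ker.2 ?_))
    rw [_root_.map_mul, hφ, hdet]
    decide

end NormalClosurePaper
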